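/- There exists a constant C > 0, depending only on n, such that for every λ > 0 and every smooth ℤⁿ-periodic φ : ℝⁿ → ℝ with Δφ = −λ²φ and ∫_Q φ(x)² dx = 1, the nodal set satisfies μH^{n−1}(N_φ) ≥ C λ^{7/4 − 3n/4}. -/

import Mathlib

/-!
A nonzero eigenfunction on the torus has `lam ≥ 2π > 1`, and `7/4 - 3n/4 ≤ 1` for `n ≥ 2`, so a
lower bound of order `lam` suffices. By Green's identity against characters, an eigenfunction `ψ` is
a trigonometric polynomial with frequencies on the sphere `4π²|K|² = lam²`.

*Doubling at most points.* Along a line, a trigonometric polynomial has the absolute value of an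
algebraic polynomial `p` on the unit circle, and there `|p(w)| = c ∏ |1 - aⱼ w|` with `|aⱼ| ≤ 1`.
Rotating `w` by an angle `O(1/deg p)` increases `log |p|` by at most a constant wherever
`∑ |1 - aⱼ w|⁻² = O(deg² p)` and `|∑ (1 - aⱼ w)⁻¹| = O(deg p)`. Both hold off a set of small
measure, the second by Kolmogorov's weak-type inequality, because `∑ (1 - aⱼ z)⁻¹` is holomorphic
with nonnegative real part. Taken one coordinate at a time, this bounds the integral of `ψ²` over
the cube of half side `s ~ 1/lam` centred at `x` by `(2sA)ⁿ ψ(x)²`, for all `x` off a set of small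
measure.

*Sign changes in cells.* Divide the unit cube into `mⁿ` cells of side `1/m` with `m ~ lam`, and
rescale each of them to the unit cube. There `ψ` is orthogonal to a weight `0 ≤ W ≤ 1` that is
bounded below on the concentric cube of half the size: a multiple of `(Δ + (lam/m)²) ∏ sin²(πxᵢ)`.
In a cell where the exceptional set of the doubling estimate has small proportion, `|ψ|` is
comparable to its `L²` mean on much of the half-size cube, so by orthogonality both `{ψ > 0}` and
`{ψ < 0}` fill a fixed proportion of the cell.

*Isoperimetry.* A path along coordinate segments from `{ψ > 0}` to `{ψ < 0}` crosses the nodal set,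
so the coordinate projections of the nodal set of such a cell have total measure bounded below.
Projections do not increase Hausdorff measure, and at least half of the `mⁿ` cells contribute
`m^{-(n-1)}` each, which adds up to a multiple of `m ~ lam`.
-/

open MeasureTheory Real Set

noncomputable section

/-- The Euclidean Laplacian `Δφ = Σᵢ ∂²φ/∂xᵢ²`. -/
def lap {n : ℕ} (φ : EuclideanSpace ℝ (Fin n) → ℝ) (x : EuclideanSpace ℝ (Fin n)) : ℝ :=
  ∑ i : Fin n,
    fderiv ℝ (fun y => fderiv ℝ φ y (EuclideanSpace.single i 1)) x (EuclideanSpace.single i 1)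

/-- `ℤⁿ`-periodicity of a function on `ℝⁿ`. -/
def ZPeriodic {n : ℕ} (φ : EuclideanSpace ℝ (Fin n) → ℝ) : Prop :=
  ∀ (x : EuclideanSpace ℝ (Fin n)) (k : Fin n → ℤ),
    φ (x + (WithLp.equiv 2 (Fin n → ℝ)).symm fun i => (k i : ℝ)) = φ x

/-- The fundamental domain `Q = [0,1)ⁿ`. -/
def Qcube (n : ℕ) : Set (EuclideanSpace ℝ (Fin n)) :=
  {x | ∀ i, x i ∈ Set.Ico (0 : ℝ) 1}

open scoped FourierTransform Finset

/-! ### A weak-type estimate on the circle -/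

/-- Lebesgue measure on `[0, 1)`, which represents the Haar probability measure of `ℝ / ℤ`. -/
def circleMeasure : Measure ℝ := volume.restrict (Ico 0 1)

instance : IsProbabilityMeasure circleMeasure := ⟨by simp [circleMeasure]⟩

lemma integrable_circleMeasure {E : Type*} [NormedAddCommGroup E] {f : ℝ → E}
    (hf : Continuous f) : Integrable f circleMeasure :=
  (hf.integrableOn_Icc (a := 0) (b := 1)).mono_set Ico_subset_Icc_self

lemma integral_circleMeasure_eq_intervalIntegral {E : Type*} [NormedAddCommGroup E]
    [NormedSpace ℝ E] (f : ℝ → E) : ∫ t, f t ∂circleMeasure = ∫ t in (0 : ℝ)..1, f t := by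
  rw [circleMeasure, integral_Ico_eq_integral_Ioo, ← integral_Ioc_eq_integral_Ioo,
    intervalIntegral.integral_of_le zero_le_one]

lemma integral_fourierChar_eq_circleAverage {E : Type*} [NormedAddCommGroup E] [NormedSpace ℝ E]
    (f : ℂ → E) : ∫ t, f (𝐞 t) ∂circleMeasure = circleAverage f 0 1 := by
  have h := intervalIntegral.integral_comp_mul_left (a := 0) (b := 1)
    (fun θ => f (circleMap 0 1 θ)) two_pi_pos.ne'
  rw [mul_zero, mul_one] at h
  rw [circleAverage_def, ← h, integral_circleMeasure_eq_intervalIntegral]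
  simp [circleMap, fourierChar_apply]

@[fun_prop]
lemma continuous_coe_fourierChar : Continuous fun t : ℝ => (𝐞 t : ℂ) :=
  continuous_subtype_val.comp continuous_fourierChar

lemma norm_fourierChar_sub_one_le (t : ℝ) : ‖(𝐞 t : ℂ) - 1‖ ≤ 2 * π * |t| := by
  have h := Real.norm_exp_I_mul_ofReal_sub_one_le (x := 2 * π * t)
  rwa [mul_comm, ← fourierChar_apply, norm_eq_abs, abs_mul, abs_of_pos two_pi_pos] at h

lemma continuous_comp_fourierChar {E : Type*} [NormedAddCommGroup E] [NormedSpace ℂ E]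
    {f : ℂ → E} (hf : DiffContOnCl ℂ f (Metric.ball 0 1)) : Continuous fun t => f (𝐞 t) :=
  hf.continuousOn_ball.comp_continuous continuous_coe_fourierChar
    fun t => by simp [Circle.norm_coe]

lemma integral_re_comp_fourierChar {f : ℂ → ℂ} (hf : DiffContOnCl ℂ f (Metric.ball 0 1)) :
    ∫ t, (f (𝐞 t)).re ∂circleMeasure = (f 0).re := by
  have hmean : circleAverage f 0 1 = f 0 := DiffContOnCl.circleAverage (by simpa using hf)
  rw [← hmean, ← integral_fourierChar_eq_circleAverage]
  exact integral_re (𝕜 := ℂ) (integrable_circleMeasure (continuous_comp_fourierChar hf))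

lemma half_le_re_one_sub_div {α : ℝ} (hα : 0 < α) {ζ : ℂ} (hζ : 3 * α ≤ ‖ζ‖) :
    1 / 2 ≤ (1 - α * (ζ + α)⁻¹).re := by
  have hden : 2 * α ≤ ‖ζ + α‖ := by
    have := norm_sub_le (ζ + α) α
    rw [add_sub_cancel_right, Complex.norm_real, norm_of_nonneg hα.le] at this
    linarith
  have hfrac : ‖α * (ζ + α)⁻¹‖ ≤ 1 / 2 := by
    rw [norm_mul, norm_inv, Complex.norm_real, norm_of_nonneg hα.le, ← div_eq_mul_inv,
      div_le_iff₀ (by linarith)]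
    linarith
  have := (Complex.re_le_norm _).trans hfrac
  rw [Complex.sub_re, Complex.one_re]
  linarith

lemma le_norm_add_ofReal (α : ℝ) {ζ : ℂ} (hζ : 0 ≤ ζ.re) : α ≤ ‖ζ + α‖ := by
  refine le_trans ?_ (Complex.re_le_norm _)
  simpa using hζ

lemma re_one_sub_div_nonneg {α : ℝ} (hα : 0 < α) {ζ : ℂ} (hζ : 0 ≤ ζ.re) :
    0 ≤ (1 - α * (ζ + α)⁻¹).re := by
  have hfrac : ‖α * (ζ + α)⁻¹‖ ≤ 1 := by
    rw [norm_mul, norm_inv, Complex.norm_real, norm_of_nonneg hα.le]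
    exact mul_inv_le_one_of_le₀ (le_norm_add_ofReal α hζ) (norm_nonneg _)
  have := (Complex.re_le_norm _).trans hfrac
  rw [Complex.sub_re, Complex.one_re]
  linarith

lemma re_one_sub_div_le {α : ℝ} (hα : 0 < α) {ζ : ℂ} (hζ : 0 ≤ ζ.re) :
    (1 - α * (ζ + α)⁻¹).re ≤ ‖ζ‖ / α := by
  have hden := le_norm_add_ofReal α hζ
  have hne : ζ + α ≠ 0 := norm_pos_iff.1 (hα.trans_le hden)
  calc (1 - α * (ζ + α)⁻¹).re ≤ ‖1 - α * (ζ + α)⁻¹‖ := Complex.re_le_norm _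
    _ = ‖ζ‖ / ‖ζ + α‖ := by rw [← norm_div]; congr 1; field_simp; ring
    _ ≤ ‖ζ‖ / α := by gcongr

/-- Kolmogorov's weak-type inequality for a function with nonnegative real part: the function
`1 - α / (H + α)` has nonnegative real part, at least `1 / 2` where `3 α ≤ ‖H‖`, and its mean is
its value at the centre. -/
lemma measureReal_norm_ge_le_of_re_nonneg {H : ℂ → ℂ} (hH : DiffContOnCl ℂ H (Metric.ball 0 1))
    (hre : ∀ z ∈ Metric.closedBall 0 1, 0 ≤ (H z).re) {α : ℝ} (hα : 0 < α) :
    circleMeasure.real {t | 3 * α ≤ ‖H (𝐞 t)‖} ≤ 2 * ‖H 0‖ / α := by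
  set F : ℂ → ℂ := fun z => 1 - α * (H z + α)⁻¹
  have hne : ∀ z ∈ closure (Metric.ball 0 1), H z + α ≠ 0 := fun z hz =>
    norm_pos_iff.1 <| hα.trans_le <| le_norm_add_ofReal α <|
      hre z (Metric.closure_ball_subset_closedBall hz)
  have hF : DiffContOnCl ℂ F (Metric.ball 0 1) :=
    (((hH.add_const (α : ℂ)).inv hne).const_smul (α : ℂ)).const_sub 1
  have hre_circle : ∀ t : ℝ, 0 ≤ (H (𝐞 t)).re := fun t => hre _ (by simp [Circle.norm_coe])
  have hmarkov := mul_meas_ge_le_integral_of_nonneg (μ := circleMeasure)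
    (f := fun t => (F (𝐞 t)).re) (ae_of_all _ fun t => re_one_sub_div_nonneg hα (hre_circle t))
    (integrable_circleMeasure (Complex.continuous_re.comp (continuous_comp_fourierChar hF)))
    (1 / 2)
  rw [integral_re_comp_fourierChar hF] at hmarkov
  have hmono : circleMeasure.real {t | 3 * α ≤ ‖H (𝐞 t)‖} ≤
      circleMeasure.real {t : ℝ | 1 / 2 ≤ (F (𝐞 t)).re} :=
    measureReal_mono fun t ht => half_le_re_one_sub_div hα ht
  have hcentre : (F 0).re ≤ ‖H 0‖ / α := re_one_sub_div_le hα (hre 0 (by simp))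
  rw [mul_div_assoc]
  linarith

lemma one_sub_mul_ne_zero {b z : ℂ} (hb : ‖b‖ < 1) (hz : ‖z‖ ≤ 1) : 1 - b * z ≠ 0 := by
  intro h
  have hbz : ‖b * z‖ < 1 := by
    rw [norm_mul]
    exact mul_lt_one_of_nonneg_of_lt_one_left (norm_nonneg _) hb hz
  rw [← sub_eq_zero.1 h, norm_one] at hbz
  exact hbz.false

lemma diffContOnCl_inv_one_sub_mul {b : ℂ} (hb : ‖b‖ < 1) :
    DiffContOnCl ℂ (fun z => (1 - b * z)⁻¹) (Metric.ball 0 1) :=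
  (Differentiable.diffContOnCl (by fun_prop)).inv fun _ hz =>
    one_sub_mul_ne_zero hb (by simpa using Metric.closure_ball_subset_closedBall hz)

lemma mul_norm_inv_one_sub_sq_le_re (z : ℂ) :
    (1 - ‖z‖) * ‖(1 - z)⁻¹‖ ^ 2 ≤ ((1 - z)⁻¹).re := by
  rw [Complex.inv_re, norm_inv, inv_pow, ← Complex.normSq_eq_norm_sq, ← div_eq_mul_inv]
  gcongr
  · exact Complex.normSq_nonneg _
  · rw [Complex.sub_re, Complex.one_re]
    linarith [Complex.re_le_norm z]

lemma re_inv_one_sub_nonneg {z : ℂ} (hz : ‖z‖ ≤ 1) : 0 ≤ ((1 - z)⁻¹).re :=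
  (mul_nonneg (sub_nonneg.2 hz) (sq_nonneg _)).trans (mul_norm_inv_one_sub_sq_le_re z)

lemma integral_norm_inv_one_sub_sq_le {b : ℂ} (hb : ‖b‖ < 1) :
    ∫ t, ‖(1 - b * 𝐞 t)⁻¹‖ ^ 2 ∂circleMeasure ≤ (1 - ‖b‖)⁻¹ := by
  have hdiff := diffContOnCl_inv_one_sub_mul hb
  have hcont := continuous_comp_fourierChar hdiff
  have hpoint : ∀ t : ℝ, ‖(1 - b * 𝐞 t)⁻¹‖ ^ 2 ≤ (1 - ‖b‖)⁻¹ * ((1 - b * 𝐞 t)⁻¹).re := by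
    intro t
    rw [le_inv_mul_iff₀ (sub_pos.2 hb)]
    simpa [Circle.norm_coe] using mul_norm_inv_one_sub_sq_le_re (b * 𝐞 t)
  calc ∫ t, ‖(1 - b * 𝐞 t)⁻¹‖ ^ 2 ∂circleMeasure
      ≤ ∫ t, (1 - ‖b‖)⁻¹ * ((1 - b * 𝐞 t)⁻¹).re ∂circleMeasure :=
        integral_mono (integrable_circleMeasure (hcont.norm.pow 2))
          (integrable_circleMeasure ((Complex.continuous_re.comp hcont).const_mul _)) hpoint
    _ = (1 - ‖b‖)⁻¹ := by
        rw [integral_const_mul, integral_re_comp_fourierChar hdiff]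
        simp

section SumInv

variable {κ : Type*} [Fintype κ]

lemma measureReal_norm_sum_inv_ge_le {b : κ → ℂ} (hb : ∀ j, ‖b j‖ < 1) {α : ℝ} (hα : 0 < α) :
    circleMeasure.real {t | 3 * α ≤ ‖∑ j, (1 - b j * 𝐞 t)⁻¹‖} ≤ 2 * Fintype.card κ / α := by
  have hdiff : DiffContOnCl ℂ (fun z => ∑ j, (1 - b j * z)⁻¹) (Metric.ball 0 1) :=
    ⟨.fun_sum fun j _ => (diffContOnCl_inv_one_sub_mul (hb j)).differentiableOn,
      continuousOn_finsetSum _ fun j _ => (diffContOnCl_inv_one_sub_mul (hb j)).continuousOn⟩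
  refine (measureReal_norm_ge_le_of_re_nonneg hdiff (fun z hz => ?_) hα).trans_eq (by simp)
  rw [Complex.re_sum]
  refine Finset.sum_nonneg fun j _ => re_inv_one_sub_nonneg ?_
  rw [norm_mul]
  exact mul_le_one₀ (hb j).le (norm_nonneg _) (by simpa using hz)

lemma measureReal_sum_norm_inv_sq_ge_le {b : κ → ℂ} {η : ℝ} (hη : 0 < η)
    (hb : ∀ j, ‖b j‖ ≤ 1 - η) {R : ℝ} (hR : 0 < R) :
    circleMeasure.real {t | R ≤ ∑ j, ‖(1 - b j * 𝐞 t)⁻¹‖ ^ 2} ≤ Fintype.card κ / (η * R) := by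
  have hb1 : ∀ j, ‖b j‖ < 1 := fun j => by linarith [hb j]
  have hint : ∀ j, Integrable (fun t : ℝ => ‖(1 - b j * 𝐞 t)⁻¹‖ ^ 2) circleMeasure := fun j =>
    integrable_circleMeasure
      ((continuous_comp_fourierChar (diffContOnCl_inv_one_sub_mul (hb1 j))).norm.pow 2)
  have hmarkov := mul_meas_ge_le_integral_of_nonneg
    (ae_of_all _ fun t => Finset.sum_nonneg fun j _ => by positivity)
    (integrable_finsetSum Finset.univ fun j _ => hint j) R
  have hmean : ∫ t, ∑ j, ‖(1 - b j * 𝐞 t)⁻¹‖ ^ 2 ∂circleMeasure ≤ Fintype.card κ * η⁻¹ := by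
    rw [integral_finsetSum _ fun j _ => hint j, ← nsmul_eq_mul, ← Finset.card_univ]
    refine Finset.sum_le_card_nsmul _ _ _ fun j _ =>
      (integral_norm_inv_one_sub_sq_le (hb1 j)).trans ?_
    gcongr
    linarith [hb j]
  rw [← div_div, le_div_iff₀' hR, div_eq_mul_inv]
  exact hmarkov.trans hmean

section Perturbation

variable {u v : κ → ℂ} {η : ℝ}

lemma norm_inv_le_two_mul_norm_inv {x y : ℂ} (hxy : ‖x - y‖ ≤ η) (hx : 2 * η < ‖x‖) :
    ‖y⁻¹‖ ≤ 2 * ‖x⁻¹‖ := by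
  have hη : 0 ≤ η := (norm_nonneg _).trans hxy
  have hy : ‖x‖ / 2 ≤ ‖y‖ := by linarith [norm_sub_norm_le x y]
  rw [norm_inv, norm_inv, ← div_eq_mul_inv, ← inv_div]
  exact inv_anti₀ (by linarith) hy

lemma sum_norm_inv_sq_le_of_norm_sub_le (huv : ∀ j, ‖u j - v j‖ ≤ η)
    (hu : ∀ j, 2 * η < ‖u j‖) : ∑ j, ‖(v j)⁻¹‖ ^ 2 ≤ 4 * ∑ j, ‖(u j)⁻¹‖ ^ 2 := by
  rw [Finset.mul_sum]
  gcongr with j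
  calc ‖(v j)⁻¹‖ ^ 2 ≤ (2 * ‖(u j)⁻¹‖) ^ 2 := by
        gcongr
        exact norm_inv_le_two_mul_norm_inv (huv j) (hu j)
    _ = 4 * ‖(u j)⁻¹‖ ^ 2 := by ring

lemma norm_sum_inv_sub_sum_inv_le (huv : ∀ j, ‖u j - v j‖ ≤ η) (hu : ∀ j, 2 * η < ‖u j‖) :
    ‖∑ j, (v j)⁻¹ - ∑ j, (u j)⁻¹‖ ≤ 2 * η * ∑ j, ‖(u j)⁻¹‖ ^ 2 := by
  rw [← Finset.sum_sub_distrib, Finset.mul_sum]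
  refine (norm_sum_le _ _).trans (Finset.sum_le_sum fun j _ => ?_)
  have hη : 0 ≤ η := (norm_nonneg _).trans (huv j)
  have hu0 : u j ≠ 0 := norm_pos_iff.1 (by linarith [hu j])
  have hv0 : v j ≠ 0 := norm_pos_iff.1 (by linarith [hu j, huv j, norm_sub_norm_le (u j) (v j)])
  calc ‖(v j)⁻¹ - (u j)⁻¹‖ = ‖u j - v j‖ * ‖(v j)⁻¹‖ * ‖(u j)⁻¹‖ := by
        rw [inv_sub_inv hv0 hu0, norm_div, norm_mul, norm_inv, norm_inv]
        field_simp
    _ ≤ η * (2 * ‖(u j)⁻¹‖) * ‖(u j)⁻¹‖ := by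
        gcongr
        · exact huv j
        · exact norm_inv_le_two_mul_norm_inv (huv j) (hu j)
    _ = 2 * η * ‖(u j)⁻¹‖ ^ 2 := by ring

lemma two_mul_lt_norm_of_sum_norm_inv_sq_lt (hη : 0 < η) (hu0 : ∀ j, u j ≠ 0)
    (hu : ∑ j, ‖(u j)⁻¹‖ ^ 2 < 1 / (2 * η) ^ 2) (j : κ) : 2 * η < ‖u j‖ := by
  have hj : ‖(u j)⁻¹‖ ^ 2 < 1 / (2 * η) ^ 2 :=
    (Finset.single_le_sum (f := fun j => ‖(u j)⁻¹‖ ^ 2) (fun _ _ => by positivity)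
      (Finset.mem_univ j)).trans_lt hu
  have hpos := norm_pos_iff.2 (hu0 j)
  rw [norm_inv, inv_pow, ← one_div, one_div_lt_one_div (by positivity) (by positivity)] at hj
  exact lt_of_pow_lt_pow_left₀ 2 hpos.le hj

lemma sum_inv_bounds_of_norm_sub_le {T : ℝ} (hη : 0 < η) (huv : ∀ j, ‖u j - v j‖ ≤ η)
    (hu0 : ∀ j, u j ≠ 0) (hu : ∑ j, ‖(u j)⁻¹‖ ^ 2 < 1 / (2 * η) ^ 2) (hT : ‖∑ j, (u j)⁻¹‖ ≤ T) :
    (∀ j, v j ≠ 0) ∧ ∑ j, ‖(v j)⁻¹‖ ^ 2 ≤ 1 / η ^ 2 ∧ ‖∑ j, (v j)⁻¹‖ ≤ T + 1 / (2 * η) := by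
  have hlarge := two_mul_lt_norm_of_sum_norm_inv_sq_lt hη hu0 hu
  refine ⟨fun j => norm_pos_iff.1 ?_, ?_, ?_⟩
  · linarith [hlarge j, huv j, norm_sub_norm_le (u j) (v j)]
  · calc ∑ j, ‖(v j)⁻¹‖ ^ 2 ≤ 4 * ∑ j, ‖(u j)⁻¹‖ ^ 2 := sum_norm_inv_sq_le_of_norm_sub_le huv hlarge
      _ ≤ 4 * (1 / (2 * η) ^ 2) := by gcongr
      _ = 1 / η ^ 2 := by field_simp; norm_num
  · calc ‖∑ j, (v j)⁻¹‖ ≤ ‖∑ j, (u j)⁻¹‖ + ‖∑ j, (v j)⁻¹ - ∑ j, (u j)⁻¹‖ :=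
          norm_le_norm_add_norm_sub' _ _
      _ ≤ T + 2 * η * (1 / (2 * η) ^ 2) := by
          gcongr
          exact (norm_sum_inv_sub_sum_inv_le huv hlarge).trans (by gcongr)
      _ = T + 1 / (2 * η) := by field_simp

end Perturbation

/-- The points `a j` are contracted to `(1 - η) a j` with `η` of order `1 / M`, where the Poisson
kernel and Kolmogorov bounds apply. Where the sum of inverse squares is not too large, no factor is
smaller than `2 η`, so that passing back to `a` costs only a constant. -/
lemma exists_measureReal_le_forall_sum_inv_le {ε M : ℝ} (hε : 0 < ε) (hε1 : ε ≤ 1) (hM : 1 ≤ M)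
    (hcard : Fintype.card κ ≤ M) {a : κ → ℂ} (ha : ∀ j, ‖a j‖ ≤ 1) :
    ∃ B : Set ℝ, circleMeasure.real B ≤ ε ∧ ∀ t ∉ B, (∀ j, 1 - a j * 𝐞 t ≠ 0) ∧
      ∑ j, ‖(1 - a j * 𝐞 t)⁻¹‖ ^ 2 ≤ 64 * (M / ε) ^ 2 ∧
      ‖∑ j, (1 - a j * 𝐞 t)⁻¹‖ ≤ 16 * (M / ε) := by
  set η : ℝ := ε / (8 * M)
  have hη0 : 0 < η := by positivity
  have hη1 : η ≤ 1 := by rw [div_le_one (by positivity)]; linarith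
  set b : κ → ℂ := fun j => (1 - η : ℝ) * a j
  have hb : ∀ j, ‖b j‖ ≤ 1 - η := fun j => by
    rw [norm_mul, Complex.norm_real, norm_of_nonneg (by linarith)]
    exact mul_le_of_le_one_right (by linarith) (ha j)
  have hb1 : ∀ j, ‖b j‖ < 1 := fun j => by linarith [hb j]
  refine ⟨{t | 1 / (2 * η) ^ 2 ≤ ∑ j, ‖(1 - b j * 𝐞 t)⁻¹‖ ^ 2} ∪
    {t | 3 * (4 * (M / ε)) ≤ ‖∑ j, (1 - b j * 𝐞 t)⁻¹‖},
    (measureReal_union_le _ _).trans ?_, fun t ht => ?_⟩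
  · rw [← add_halves ε]
    refine add_le_add ((measureReal_sum_norm_inv_sq_ge_le hη0 hb (by positivity)).trans ?_)
      ((measureReal_norm_sum_inv_ge_le hb1 (by positivity)).trans ?_)
    · rw [div_le_iff₀ (by positivity)]
      refine hcard.trans_eq ?_
      simp only [η]
      field_simp
      norm_num
    · rw [div_le_iff₀ (by positivity)]
      field_simp
      linarith
  · simp only [mem_union, mem_ofPred_eq, not_or, not_le] at ht
    have hclose : ∀ j, ‖(1 - b j * 𝐞 t) - (1 - a j * 𝐞 t)‖ ≤ η := fun j => by
      rw [show (1 - b j * 𝐞 t) - (1 - a j * 𝐞 t) = (η : ℂ) * (a j * 𝐞 t) by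
        simp only [b]; push_cast; ring, norm_mul, norm_mul, Circle.norm_coe, mul_one,
        Complex.norm_real, norm_of_nonneg hη0.le]
      exact mul_le_of_le_one_right hη0.le (ha j)
    obtain ⟨hne, hsq, hsum⟩ := sum_inv_bounds_of_norm_sub_le hη0 hclose
      (fun j => one_sub_mul_ne_zero (hb1 j) (Circle.norm_coe _).le) ht.1 ht.2.le
    refine ⟨hne, hsq.trans_eq ?_, hsum.trans_eq ?_⟩ <;>
    · simp only [η]
      field_simp
      norm_num

end SumInv

/-! ### Doubling for polynomials on the circle -/

lemma norm_one_add_le_exp (z : ℂ) : ‖1 + z‖ ≤ exp (‖z‖ ^ 2 / 2 + z.re) := by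
  refine le_of_sq_le_sq ?_ (exp_pos _).le
  calc ‖1 + z‖ ^ 2 = 2 * (‖z‖ ^ 2 / 2 + z.re) + 1 := by
        simp only [← Complex.normSq_eq_norm_sq, Complex.normSq_apply, Complex.add_re,
          Complex.add_im, Complex.one_re, Complex.one_im]
        ring
    _ ≤ exp (2 * (‖z‖ ^ 2 / 2 + z.re)) := add_one_le_exp _
    _ = exp (‖z‖ ^ 2 / 2 + z.re) ^ 2 := by rw [← exp_nat_mul, Nat.cast_ofNat]

section Rotation

variable {κ : Type*} [Fintype κ]

lemma prod_norm_one_add_le_exp (z : κ → ℂ) :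
    ∏ j, ‖1 + z j‖ ≤ exp ((∑ j, ‖z j‖ ^ 2) / 2 + ‖∑ j, z j‖) :=
  calc ∏ j, ‖1 + z j‖ ≤ ∏ j, exp (‖z j‖ ^ 2 / 2 + (z j).re) :=
        Finset.prod_le_prod (fun j _ => norm_nonneg _) fun j _ => norm_one_add_le_exp _
    _ = exp ((∑ j, ‖z j‖ ^ 2) / 2 + (∑ j, z j).re) := by
        rw [← exp_sum, Finset.sum_add_distrib, ← Finset.sum_div, Complex.re_sum]
    _ ≤ exp ((∑ j, ‖z j‖ ^ 2) / 2 + ‖∑ j, z j‖) := by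
        gcongr
        exact Complex.re_le_norm _

/-- Multiplying `x j` by `1 + δ` multiplies `1 - x j` by `1 - δ ((1 - x j)⁻¹ - 1)`. -/
lemma prod_norm_one_sub_mul_le {x : κ → ℂ} (hx : ∀ j, ‖x j‖ ≤ 1) (hne : ∀ j, 1 - x j ≠ 0) (δ : ℂ) :
    ∏ j, ‖1 - x j * (1 + δ)‖ ≤
      exp (‖δ‖ ^ 2 * (∑ j, ‖(1 - x j)⁻¹‖ ^ 2) / 2 +
        ‖δ‖ * (‖∑ j, (1 - x j)⁻¹‖ + Fintype.card κ)) * ∏ j, ‖1 - x j‖ := by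
  set z : κ → ℂ := fun j => -δ * ((1 - x j)⁻¹ - 1)
  have hfactor : ∀ j, ‖1 - x j * (1 + δ)‖ = ‖1 + z j‖ * ‖1 - x j‖ := fun j => by
    rw [← norm_mul]
    congr 1
    have := hne j
    simp only [z]
    field_simp
    ring
  have hsq : ∑ j, ‖z j‖ ^ 2 ≤ ‖δ‖ ^ 2 * ∑ j, ‖(1 - x j)⁻¹‖ ^ 2 := by
    rw [Finset.mul_sum]
    gcongr with j
    have hz : z j = -δ * (x j * (1 - x j)⁻¹) := by
      have := hne j
      simp only [z]
      field_simp
      ring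
    rw [hz, norm_mul, norm_neg, mul_pow, norm_mul, mul_pow]
    gcongr
    exact mul_le_of_le_one_left (by positivity) (pow_le_one₀ (norm_nonneg _) (hx j))
  have hsum : ‖∑ j, z j‖ ≤ ‖δ‖ * (‖∑ j, (1 - x j)⁻¹‖ + Fintype.card κ) := by
    rw [← Finset.mul_sum, Finset.sum_sub_distrib, norm_mul, norm_neg]
    gcongr
    exact (norm_sub_le _ _).trans_eq (by simp)
  simp_rw [hfactor]
  rw [Finset.prod_mul_distrib]
  gcongr
  refine (prod_norm_one_add_le_exp z).trans (exp_le_exp.2 ?_)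
  gcongr

end Rotation

/-- A root outside the closed disc is inverted, one inside is reflected in the circle and then
inverted. -/
lemma exists_norm_sub_eq_mul_norm_one_sub (ζ : ℂ) : ∃ (a : ℂ) (c : ℝ), ‖a‖ ≤ 1 ∧ 0 ≤ c ∧
    ∀ w : ℂ, ‖w‖ = 1 → ‖w - ζ‖ = c * ‖1 - a * w‖ := by
  rcases le_or_gt ‖ζ‖ 1 with hζ | hζ
  · refine ⟨(starRingEnd ℂ) ζ, 1, by simpa using hζ, zero_le_one, fun w hw => ?_⟩
    have hconj : w * (starRingEnd ℂ) w = 1 := by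
      rw [Complex.mul_conj, Complex.normSq_eq_norm_sq, hw, one_pow, Complex.ofReal_one]
    have hreflect : w - ζ = w * (starRingEnd ℂ) (1 - (starRingEnd ℂ) ζ * w) := by
      simp only [map_sub, map_one, map_mul, Complex.conj_conj]
      linear_combination ζ * hconj
    rw [hreflect, norm_mul, hw, RCLike.norm_conj]
  · have hζ0 : ζ ≠ 0 := norm_pos_iff.1 (zero_lt_one.trans hζ)
    refine ⟨ζ⁻¹, ‖ζ‖, ?_, norm_nonneg _, fun w _ => ?_⟩
    · rw [norm_inv]
      exact inv_le_one_of_one_le₀ hζ.le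
    · rw [← norm_mul, mul_sub, mul_one, mul_inv_cancel_left₀ hζ0, norm_sub_rev]

lemma exists_norm_eval_eq_mul_prod_norm_one_sub (p : Polynomial ℂ) :
    ∃ (a : p.roots → ℂ) (c : ℝ), (∀ j, ‖a j‖ ≤ 1) ∧ 0 ≤ c ∧
      ∀ w : ℂ, ‖w‖ = 1 → ‖p.eval w‖ = c * ∏ j, ‖1 - a j * w‖ := by
  choose a c ha hc hac using exists_norm_sub_eq_mul_norm_one_sub
  refine ⟨fun ζ => a ζ.1, ‖p.leadingCoeff‖ * ∏ ζ : p.roots, c ζ.1, fun ζ => ha _,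
    mul_nonneg (norm_nonneg _) (Finset.prod_nonneg fun ζ _ => hc _), fun w hw => ?_⟩
  have hroots : ‖(p.roots.map fun ζ => w - ζ).prod‖ = ∏ ζ : p.roots, ‖w - ζ.1‖ := by
    rw [← norm_prod, Finset.prod_eq_multiset_prod, Multiset.map_univ]
  rw [(IsAlgClosed.splits p).eval_eq_prod_roots w, norm_mul, hroots, mul_assoc,
    ← Finset.prod_mul_distrib]
  simp_rw [hac _ w hw]

/-- The exceptional set of a doubling inequality for `p` on the unit circle: the `t` for which some
rotation of `exp (2πit)` by an angle of at most `2πs` increases `‖p‖` by more than the factor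
`A`. -/
def growthSet (A s : ℝ) (p : Polynomial ℂ) : Set ℝ :=
  {t | ∃ h, |h| ≤ s ∧ A * ‖p.eval (𝐞 t : ℂ)‖ < ‖p.eval (𝐞 (t + h) : ℂ)‖}

lemma exists_measureReal_growthSet_le {ε : ℝ} (hε : 0 < ε) (hε1 : ε ≤ 1) (C : ℝ) :
    ∃ A > 0, ∀ M ≥ 1, ∀ s, s * M ≤ C → ∀ p : Polynomial ℂ, p.natDegree ≤ M →
      circleMeasure.real (growthSet A s p) ≤ ε := by
  set K := 2 * π * C
  refine ⟨exp (K ^ 2 * (64 / ε ^ 2) / 2 + K * (16 / ε + 1)), exp_pos _, fun M hM s hs p hp => ?_⟩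
  obtain ⟨a, c, ha, hc, hfactor⟩ := exists_norm_eval_eq_mul_prod_norm_one_sub p
  have hcard : (Fintype.card p.roots : ℝ) ≤ M := by
    rw [Multiset.card_coe]
    exact le_trans (mod_cast p.card_roots') hp
  obtain ⟨B, hB, hgood⟩ := exists_measureReal_le_forall_sum_inv_le hε hε1 hM hcard ha
  refine (measureReal_mono ?_).trans hB
  rintro t ⟨h, hh, hlt⟩
  by_contra ht
  refine hlt.not_ge ?_
  obtain ⟨hne, hsq, hsum⟩ := hgood t ht
  set δ : ℂ := 𝐞 h - 1
  have hδ : ‖δ‖ * M ≤ K :=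
    calc ‖δ‖ * M ≤ 2 * π * s * M := by
          gcongr
          exact (norm_fourierChar_sub_one_le h).trans (by gcongr)
      _ ≤ K := (mul_assoc _ _ _).trans_le (mul_le_mul_of_nonneg_left hs two_pi_pos.le)
  have hrot : ∀ j, a j * 𝐞 (t + h) = a j * 𝐞 t * (1 + δ) := fun j => by
    simp only [δ, AddChar.map_add_eq_mul, Circle.coe_mul]
    ring
  have hexp : ‖δ‖ ^ 2 * (∑ j, ‖(1 - a j * 𝐞 t)⁻¹‖ ^ 2) / 2 +
      ‖δ‖ * (‖∑ j, (1 - a j * 𝐞 t)⁻¹‖ + Fintype.card p.roots) ≤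
      K ^ 2 * (64 / ε ^ 2) / 2 + K * (16 / ε + 1) :=
    calc _ ≤ ‖δ‖ ^ 2 * (64 * (M / ε) ^ 2) / 2 + ‖δ‖ * (16 * (M / ε) + M) := by gcongr
      _ = (‖δ‖ * M) ^ 2 * (64 / ε ^ 2) / 2 + ‖δ‖ * M * (16 / ε + 1) := by ring
      _ ≤ _ := by gcongr
  have hprod := prod_norm_one_sub_mul_le
    (fun j => show ‖a j * 𝐞 t‖ ≤ 1 by simpa [Circle.norm_coe] using ha j) hne δ
  simp_rw [← hrot] at hprod
  rw [hfactor _ (Circle.norm_coe _), hfactor _ (Circle.norm_coe _), mul_left_comm]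
  gcongr
  exact hprod.trans (by gcongr)

/-! ### Doubling for trigonometric polynomials in several variables -/

/-- Lebesgue measure on the unit cube, which represents the Haar probability measure of the torus
`ℝ^ι / ℤ^ι`. -/
def torusMeasure (ι : Type*) [Fintype ι] : Measure (ι → ℝ) := Measure.pi fun _ => circleMeasure

/-- The character `x ↦ exp (2πi ⟨k, x⟩)` of the torus. -/
def torusChar {ι : Type*} [Fintype ι] (k : ι → ℤ) (x : ι → ℝ) : Circle := 𝐞 (∑ i, k i * x i)

/-- The trigonometric polynomial with frequencies `k j` and coefficients `c j`. -/
def trigSum {ι κ : Type*} [Fintype ι] [Fintype κ] (k : κ → ι → ℤ) (c : κ → ℂ) (x : ι → ℝ) : ℂ :=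
  ∑ j, c j * torusChar (k j) x

section TrigSum

variable {ι κ : Type*} [Fintype ι] [Fintype κ] {k : κ → ι → ℤ} {c : κ → ℂ}

instance : IsProbabilityMeasure (torusMeasure ι) :=
  inferInstanceAs (IsProbabilityMeasure (Measure.pi _))

lemma coe_torusChar (k : ι → ℤ) (x : ι → ℝ) : (torusChar k x : ℂ) = ∏ i, (𝐞 (k i * x i) : ℂ) := by
  exact map_prod (Circle.coeHom.comp 𝐞.toMonoidHom) (fun i => Multiplicative.ofAdd (k i * x i)) _

lemma torusChar_add_right (k : ι → ℤ) (x y : ι → ℝ) :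
    torusChar k (x + y) = torusChar k x * torusChar k y := by
  simp [torusChar, mul_add, Finset.sum_add_distrib, AddChar.map_add_eq_mul]

lemma torusChar_add_left (k l : ι → ℤ) (x : ι → ℝ) :
    torusChar (k + l) x = torusChar k x * torusChar l x := by
  simp [torusChar, add_mul, Finset.sum_add_distrib, AddChar.map_add_eq_mul]

lemma torusChar_single [DecidableEq ι] (k : ι → ℤ) (i : ι) (t : ℝ) :
    torusChar k (Pi.single i t) = 𝐞 (k i * t) := by
  simp [torusChar, Pi.single_apply]

@[fun_prop]
lemma continuous_coe_torusChar (k : ι → ℤ) : Continuous fun x => (torusChar k x : ℂ) :=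
  continuous_coe_fourierChar.comp (by fun_prop)

lemma continuous_trigSum : Continuous (trigSum k c) := by
  unfold trigSum
  fun_prop

lemma continuous_of_eq_trigSum {f : (ι → ℝ) → ℝ} (hf : ∀ x, (f x : ℂ) = trigSum k c x) :
    Continuous f := by
  have h : f = fun x => (trigSum k c x).re := funext fun x => by rw [← hf, Complex.ofReal_re]
  rw [h]
  exact Complex.continuous_re.comp continuous_trigSum

lemma trigSum_sq (x : ι → ℝ) :
    trigSum k c x ^ 2 = trigSum (fun p : κ × κ => k p.1 + k p.2) (fun p => c p.1 * c p.2) x := by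
  simp only [trigSum, sq, Finset.sum_mul_sum, ← Fintype.sum_prod_type', torusChar_add_left,
    Circle.coe_mul]
  exact Finset.sum_congr rfl fun p _ => by ring

lemma trigSum_add (x y : ι → ℝ) :
    trigSum k c (x + y) = trigSum k (fun j => c j * torusChar (k j) y) x := by
  simp only [trigSum, torusChar_add_right, Circle.coe_mul]
  exact Finset.sum_congr rfl fun j _ => by ring

lemma intervalIntegral_trigSum_add_single [DecidableEq ι] (i : ι) (a b : ℝ) (x : ι → ℝ) :
    ∫ t in a..b, trigSum k c (x + Pi.single i t) =
      trigSum k (fun j => c j * ∫ t in a..b, (𝐞 (k j i * t) : ℂ)) x := by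
  simp only [trigSum_add, torusChar_single]
  simp only [trigSum]
  rw [intervalIntegral.integral_finsetSum]
  · simp only [intervalIntegral.integral_mul_const, intervalIntegral.integral_const_mul]
  · exact fun j _ => Continuous.intervalIntegrable (by fun_prop) _ _

lemma setIntegral_trigSum_add {a b : ℝ} (hab : a ≤ b) (x : ι → ℝ) :
    ∫ y in univ.pi fun _ => Icc a b, trigSum k c (x + y) =
      trigSum k (fun j => c j * ∏ i, ∫ t in a..b, (𝐞 (k j i * t) : ℂ)) x := by
  simp only [trigSum_add]
  simp only [trigSum]
  rw [integral_finsetSum]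
  · refine Finset.sum_congr rfl fun j _ => ?_
    simp only [integral_mul_const, integral_const_mul, coe_torusChar]
    rw [volume_pi, Measure.restrict_pi_pi,
      integral_fintype_prod_eq_prod (fun i t => (𝐞 (k j i * t) : ℂ))]
    simp only [intervalIntegral.integral_of_le hab, integral_Icc_eq_integral_Ioc]
  · exact fun j _ => (Continuous.continuousOn (by fun_prop)).integrableOn_compact
      (isCompact_univ_pi fun _ => isCompact_Icc)

lemma exists_polynomial_norm_trigSum_eq [DecidableEq ι] {D : ℕ} {i : ι}
    (hk : ∀ j, |k j i| ≤ D) (x : ι → ℝ) :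
    ∃ p : Polynomial ℂ, p.natDegree ≤ 2 * D ∧
      ∀ t, ‖trigSum k c (x + Pi.single i t)‖ = ‖p.eval (𝐞 t : ℂ)‖ := by
  refine ⟨∑ j, Polynomial.C (c j * torusChar (k j) x) * Polynomial.X ^ (k j i + D).toNat, ?_,
    fun t => ?_⟩
  · refine Polynomial.natDegree_sum_le_of_forall_le _ _ fun j _ => ?_
    refine (Polynomial.natDegree_C_mul_X_pow_le _ _).trans ?_
    have := abs_le.1 (hk j)
    omega
  · have hpow (j : κ) : (𝐞 t : ℂ) ^ (k j i + D).toNat = 𝐞 (k j i * t) * 𝐞 (D * t) := by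
      have hcast : (((k j i + D).toNat : ℕ) : ℝ) = k j i + D := by
        have := abs_le.1 (hk j)
        exact_mod_cast Int.toNat_of_nonneg (by omega : 0 ≤ k j i + D)
      rw [← Circle.coe_pow, ← AddChar.map_nsmul_eq_pow, nsmul_eq_mul, hcast, add_mul,
        AddChar.map_add_eq_mul, Circle.coe_mul]
    have heval : (∑ j, Polynomial.C (c j * torusChar (k j) x) *
        Polynomial.X ^ (k j i + D).toNat).eval (𝐞 t : ℂ) =
          trigSum k c (x + Pi.single i t) * 𝐞 (D * t) := by
      rw [trigSum_add, trigSum, Polynomial.eval_finsetSum, Finset.sum_mul]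
      simp only [Polynomial.eval_mul, Polynomial.eval_C, Polynomial.eval_pow, Polynomial.eval_X,
        hpow, torusChar_single]
      exact Finset.sum_congr rfl fun j _ => by ring
    rw [heval, norm_mul, Circle.norm_coe, mul_one]

end TrigSum

lemma measureReal_pi_le_of_forall_slice_le {ι : Type*} [Fintype ι] [DecidableEq ι] {X : ι → Type*}
    [∀ i, MeasurableSpace (X i)] {μ : ∀ i, Measure (X i)} [∀ i, IsProbabilityMeasure (μ i)]
    {E : Set (∀ i, X i)} (hE : MeasurableSet E) (i : ι) {ε : ℝ}
    (h : ∀ x, (μ i).real {t | Function.update x i t ∈ E} ≤ ε) : (Measure.pi μ).real E ≤ ε := by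
  obtain ⟨x⟩ := (Measure.pi μ).nonempty_of_neZero
  have hε : 0 ≤ ε := measureReal_nonneg.trans (h x)
  refine ENNReal.toReal_le_of_le_ofReal hε ?_
  rw [← lintegral_indicator_one hE]
  calc ∫⁻ x, E.indicator 1 x ∂Measure.pi μ ≤ ∫⁻ _, ENNReal.ofReal ε ∂Measure.pi μ := by
        refine lintegral_le_of_lmarginal_le {i} (measurable_one.indicator hE) measurable_const
          fun x => ?_
        have hslice : MeasurableSet {t | Function.update x i t ∈ E} := measurable_update x hE
        rw [lmarginal_singleton, lmarginal_singleton, lintegral_const, measure_univ, mul_one]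
        calc ∫⁻ t, E.indicator 1 (Function.update x i t) ∂μ i
            = μ i {t | Function.update x i t ∈ E} := lintegral_indicator_one hslice
          _ ≤ ENNReal.ofReal ε := by
            rw [← ofReal_measureReal]
            exact ENNReal.ofReal_le_ofReal (h x)
    _ = ENNReal.ofReal ε := by simp

section Doubling

variable {ι κ : Type*} [Fintype ι] [Fintype κ] {k : κ → ι → ℤ} {c : κ → ℂ} {D : ℕ} {s A ε : ℝ}

lemma measureReal_trigSum_doubling_single [DecidableEq ι] (hs : 0 ≤ s)
    (hA : ∀ p : Polynomial ℂ, p.natDegree ≤ 2 * D →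
      circleMeasure.real (growthSet A s p) ≤ ε)
    {i : ι} (hk : ∀ j, |k j i| ≤ D) {f : (ι → ℝ) → ℝ} (hf : ∀ x, (f x : ℂ) = trigSum k c x)
    (hf0 : ∀ x, 0 ≤ f x) :
    (torusMeasure ι).real {x | 2 * s * A * f x < ∫ t in -s..s, f (x + Pi.single i t)} ≤ ε := by
  have hfc := continuous_of_eq_trigSum hf
  have hint : Continuous fun x : ι → ℝ => ∫ t in -s..s, f (x + Pi.single i t) := by
    refine continuous_of_eq_trigSum (k := k)
      (c := fun j => c j * ∫ t in -s..s, (𝐞 (k j i * t) : ℂ)) fun x => ?_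
    simp only [← intervalIntegral.integral_ofReal, hf, intervalIntegral_trigSum_add_single]
  refine measureReal_pi_le_of_forall_slice_le (measurableSet_lt (by fun_prop) hint.measurable) i
    fun x : ι → ℝ => ?_
  obtain ⟨p, hp, hpe⟩ := exists_polynomial_norm_trigSum_eq (c := c) hk (Function.update x i 0)
  have hupdate (t : ℝ) : Function.update x i 0 + Pi.single i t = Function.update x i t := by
    ext l
    obtain rfl | hl := eq_or_ne l i <;> simp [*]
  have hupdate_add (t h : ℝ) :
      Function.update x i t + Pi.single i h = Function.update x i (t + h) := by
    rw [← hupdate, ← hupdate (t + h), Pi.single_add, add_assoc]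
  have hnorm (t : ℝ) : ‖p.eval (𝐞 t : ℂ)‖ = f (Function.update x i t) := by
    rw [← hpe, hupdate, ← hf, Complex.norm_real, norm_of_nonneg (hf0 _)]
  refine (measureReal_mono fun t ht => ?_).trans (hA p hp)
  contrapose! ht
  simp only [growthSet, mem_ofPred_eq, not_exists, not_and, not_lt, hnorm, hupdate_add]
    at ht ⊢
  calc ∫ h in -s..s, f (Function.update x i (t + h))
      ≤ ∫ _ in -s..s, A * f (Function.update x i t) :=
        intervalIntegral.integral_mono_on (by linarith)
          (Continuous.intervalIntegrable (by fun_prop) _ _) (by simp)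
          fun h hh => ht h (abs_le.2 hh)
    _ = 2 * s * A * f (Function.update x i t) := by
        rw [intervalIntegral.integral_const, smul_eq_mul]
        ring

/-- One coordinate at a time: the doubling estimate is applied to the partial integrals over the
coordinates in a growing set `T`. -/
lemma exists_partialIntegral_doubling (hs : 0 ≤ s) (hA0 : 0 ≤ A)
    (hA : ∀ p : Polynomial ℂ, p.natDegree ≤ 2 * D →
      circleMeasure.real (growthSet A s p) ≤ ε)
    (hk : ∀ j i, |k j i| ≤ D) {g : (ι → ℝ) → ℝ} (hg : ∀ x, (g x : ℂ) = trigSum k c x)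
    (hg0 : ∀ x, 0 ≤ g x) (T : Finset ι) : ∃ f : (ι → ℝ) → ℝ, (∀ x, 0 ≤ f x) ∧
      (∀ x, (f x : ℂ) = trigSum k (fun j => c j * ∏ i ∈ T, ∫ t in -s..s, (𝐞 (k j i * t) : ℂ)) x) ∧
      (torusMeasure ι).real {x | (2 * s * A) ^ T.card * g x < f x} ≤ T.card * ε := by
  classical
  induction T using Finset.induction with
  | empty => exact ⟨g, hg0, by simpa using hg, by simp⟩
  | insert i T hi ih =>
    obtain ⟨f, hf0, hf, hfε⟩ := ih
    refine ⟨fun x => ∫ t in -s..s, f (x + Pi.single i t),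
      fun x => intervalIntegral.integral_nonneg (by linarith) fun _ _ => hf0 _, fun x => ?_, ?_⟩
    · simp only [← intervalIntegral.integral_ofReal, hf, intervalIntegral_trigSum_add_single,
        Finset.prod_insert hi]
      exact congrArg (trigSum k · x) (funext fun j => by ring)
    · have hstep := measureReal_trigSum_doubling_single hs hA (fun j => hk j i) hf hf0
      rw [Finset.card_insert_of_notMem hi]
      calc _ ≤ (torusMeasure ι).real
            ({x | 2 * s * A * f x < ∫ t in -s..s, f (x + Pi.single i t)} ∪
              {x | (2 * s * A) ^ T.card * g x < f x}) := by
            refine measureReal_mono fun x hx => ?_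
            contrapose! hx
            simp only [mem_union, mem_ofPred_eq, not_or, not_lt] at hx ⊢
            calc _ ≤ 2 * s * A * f x := hx.1
              _ ≤ 2 * s * A * ((2 * s * A) ^ T.card * g x) := by gcongr; exact hx.2
              _ = (2 * s * A) ^ (T.card + 1) * g x := by ring
        _ ≤ ε + T.card * ε := by grw [measureReal_union_le, hstep, hfε]
        _ = (T.card + 1 : ℕ) * ε := by push_cast; ring

/-- The exceptional set of a doubling inequality for `g`: the points `x` at which the integral of
`g` over the cube of half side `s` centred at `x` exceeds `A ^ n` times its value for the constant
function `g x`. -/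
def boxGrowthSet (A s : ℝ) (g : (ι → ℝ) → ℝ) : Set (ι → ℝ) :=
  {x | (2 * s * A) ^ Fintype.card ι * g x < ∫ h in univ.pi fun _ => Icc (-s) s, g (x + h)}

theorem measureReal_boxGrowthSet_le (hs : 0 ≤ s) (hA0 : 0 ≤ A)
    (hA : ∀ p : Polynomial ℂ, p.natDegree ≤ 2 * D →
      circleMeasure.real (growthSet A s p) ≤ ε)
    (hk : ∀ j i, |k j i| ≤ D) {g : (ι → ℝ) → ℝ} (hg : ∀ x, (g x : ℂ) = trigSum k c x)
    (hg0 : ∀ x, 0 ≤ g x) :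
    (torusMeasure ι).real (boxGrowthSet A s g) ≤ Fintype.card ι * ε := by
  obtain ⟨f, -, hf, hfε⟩ := exists_partialIntegral_doubling hs hA0 hA hk hg hg0 Finset.univ
  have hfg (x : ι → ℝ) : f x = ∫ h in univ.pi fun _ => Icc (-s) s, g (x + h) := by
    rw [← Complex.ofReal_inj, hf, ← integral_complex_ofReal]
    simp only [hg, setIntegral_trigSum_add (by linarith : -s ≤ s)]
  simpa only [boxGrowthSet, hfg, Finset.card_univ] using hfε

end Doubling

/-! ### Green's identity on boxes -/

section Green

variable {ι E : Type*} [DecidableEq ι] [NormedAddCommGroup E] [NormedSpace ℝ E]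

/-- The `i`-th partial derivative of a function on `ι → ℝ`. -/
def partialDeriv (i : ι) (u : (ι → ℝ) → E) (x : ι → ℝ) : E := fderiv ℝ u x (Pi.single i 1)

lemma partialDeriv_eq_of_hasDerivAt_update [Finite ι] {u : (ι → ℝ) → E} {u' : E} {i : ι}
    {x : ι → ℝ} (hu : DifferentiableAt ℝ u x)
    (h : HasDerivAt (fun t => u (Function.update x i t)) u' (x i)) : partialDeriv i u x = u' := by
  have := Fintype.ofFinite ι
  have hux : HasFDerivAt u (fderiv ℝ u x) (Function.update x i (x i)) := by
    rw [Function.update_eq_self]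
    exact hu.hasFDerivAt
  exact (hux.comp_hasDerivAt (x i) (hasDerivAt_update x i (x i))).unique h

lemma partialDeriv_add_period [Finite ι] {i : ι} {u : (ι → ℝ) → E} {c : ι → ℝ}
    (h : ∀ x, u (x + c) = u x) (x : ι → ℝ) : partialDeriv i u (x + c) = partialDeriv i u x := by
  have := Fintype.ofFinite ι
  simp only [partialDeriv, ← fderiv_comp_add_right, h]

lemma partialDeriv_comp_smul_add [Finite ι] (i : ι) (u : (ι → ℝ) → E) (r : ℝ) (v x : ι → ℝ) :
    partialDeriv i (fun y => u (r • (v + y))) x = r • partialDeriv i u (r • (v + x)) := by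
  have := Fintype.ofFinite ι
  simp only [partialDeriv]
  rw [fderiv_comp_add_left (f := fun y => u (r • y)), fderiv_comp_smul]
  rfl

variable [Fintype ι]

/-- The Laplacian of a function on `ι → ℝ`. Mathlib's Laplacian requires an inner product space,
whereas integration over boxes takes place on `ι → ℝ` with its sup norm. -/
def coordLaplacian (u : (ι → ℝ) → E) (x : ι → ℝ) : E := ∑ i, partialDeriv i (partialDeriv i u) x

/-- The `i`-th component `∂ᵢu v - u ∂ᵢv` of the vector field whose divergence is `Δu v - u Δv`. -/
def greenFlux (u : (ι → ℝ) → ℝ) (v : (ι → ℝ) → E) (i : ι) (x : ι → ℝ) : E :=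
  partialDeriv i u x • v x - u x • partialDeriv i v x

lemma contDiff_partialDeriv {u : (ι → ℝ) → E} {m n : WithTop ℕ∞} (hu : ContDiff ℝ n u)
    (hmn : m + 1 ≤ n) (i : ι) : ContDiff ℝ m (partialDeriv i u) :=
  (hu.fderiv_right hmn).clm_apply contDiff_const

lemma partialDeriv_greenFlux {u : (ι → ℝ) → ℝ} {v : (ι → ℝ) → E} (hu : ContDiff ℝ 2 u)
    (hv : ContDiff ℝ 2 v) (i : ι) (x : ι → ℝ) :
    partialDeriv i (greenFlux u v i) x =
      partialDeriv i (partialDeriv i u) x • v x - u x • partialDeriv i (partialDeriv i v) x := by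
  have hu' : ContDiff ℝ 1 (partialDeriv i u) := contDiff_partialDeriv hu (by norm_num) i
  have hv' : ContDiff ℝ 1 (partialDeriv i v) := contDiff_partialDeriv hv (by norm_num) i
  have hflux := ((hu'.differentiable one_ne_zero x).hasFDerivAt.smul
    (hv.differentiable two_ne_zero x).hasFDerivAt).sub
    ((hu.differentiable two_ne_zero x).hasFDerivAt.smul
      (hv'.differentiable one_ne_zero x).hasFDerivAt)
  calc partialDeriv i (greenFlux u v i) x = _ := DFunLike.congr_fun hflux.fderiv (Pi.single i 1)
    _ = _ := by
      simp only [sub_apply, add_apply, smul_apply, ContinuousLinearMap.smulRight_apply,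
        partialDeriv]
      abel

lemma integral_Icc_coordLaplacian_smul_sub_eq_zero {k : ℕ} {u : (Fin (k + 1) → ℝ) → ℝ}
    {v : (Fin (k + 1) → ℝ) → E} (hu : ContDiff ℝ 2 u) (hv : ContDiff ℝ 2 v)
    {a b : Fin (k + 1) → ℝ} (hab : a ≤ b)
    (hface : ∀ i x, greenFlux u v i (Function.update x i (b i)) =
      greenFlux u v i (Function.update x i (a i))) :
    ∫ x in Icc a b, (coordLaplacian u x • v x - u x • coordLaplacian v x) = 0 := by
  have hflux (i) : ContDiff ℝ 1 (greenFlux u v i) :=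
    ((contDiff_partialDeriv hu (by norm_num) i).smul (hv.of_le (by norm_num))).sub
      ((hu.of_le (by norm_num)).smul (contDiff_partialDeriv hv (by norm_num) i))
  have hdivergence (x) : ∑ i, partialDeriv i (greenFlux u v i) x =
      coordLaplacian u x • v x - u x • coordLaplacian v x := by
    simp only [partialDeriv_greenFlux hu hv, Finset.sum_sub_distrib, coordLaplacian,
      Finset.sum_smul, Finset.smul_sum]
  have hcont : Continuous fun x => ∑ i, partialDeriv i (greenFlux u v i) x :=
    continuous_finsetSum _ fun i _ =>
      (contDiff_partialDeriv (m := 0) (hflux i) (by norm_num) i).continuous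
  have hface' (i : Fin (k + 1)) (y : Fin k → ℝ) : greenFlux u v i (i.insertNth (b i) y) =
      greenFlux u v i (i.insertNth (a i) y) := by
    simpa using hface i (i.insertNth (b i) y)
  simp only [← hdivergence]
  refine (integral_divergence_of_hasFDerivAt_off_countable' a b hab (greenFlux u v)
    (fun i => fderiv ℝ (greenFlux u v i)) ∅ countable_empty
    (fun i => (hflux i).continuous.continuousOn)
    (fun x _ i => ((hflux i).differentiable one_ne_zero x).hasFDerivAt)
    (hcont.continuousOn.integrableOn_compact isCompact_Icc)).trans ?_
  exact Finset.sum_eq_zero fun i _ => by simp only [hface', sub_self]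

end Green

/-! ### Eigenfunctions are trigonometric polynomials -/

section TorusChar

variable {ι : Type*} [Fintype ι]

lemma torusChar_add_int (k : ι → ℤ) (x : ι → ℝ) (m : ι → ℤ) :
    torusChar k (x + fun i => (m i : ℝ)) = torusChar k x := by
  have hm : torusChar k (fun i => (m i : ℝ)) = 1 := by
    have hcast : ∑ i, (k i : ℝ) * m i = (∑ i, k i * m i : ℤ) := by push_cast; rfl
    rw [torusChar, hcast, fourierChar_apply', Circle.exp_eq_one]
    exact ⟨_, mul_comm _ _⟩
  rw [torusChar_add_right, hm, mul_one]

lemma contDiff_coe_torusChar (k : ι → ℤ) {n : WithTop ℕ∞} :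
    ContDiff ℝ n fun x => (torusChar k x : ℂ) := by
  simp only [torusChar, fourierChar_apply]
  have hphase : ContDiff ℝ n fun x : ι → ℝ => 2 * π * ∑ i, k i * x i := by fun_prop
  exact ((Complex.ofRealCLM.contDiff.comp hphase).mul contDiff_const).cexp

lemma mFourier_coe (k : ι → ℤ) (x : ι → ℝ) :
    UnitAddTorus.mFourier k (fun i => (x i : UnitAddCircle)) = torusChar k x := by
  rw [coe_torusChar]
  refine Finset.prod_congr rfl fun i _ => ?_
  rw [fourier_coe_apply, fourierChar_apply]
  push_cast
  ring_nf

variable [DecidableEq ι]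

lemma partialDeriv_torusChar (k : ι → ℤ) (i : ι) (x : ι → ℝ) :
    partialDeriv i (fun y => (torusChar k y : ℂ)) x =
      (2 * π * k i * Complex.I) * torusChar k x := by
  refine partialDeriv_eq_of_hasDerivAt_update
    ((contDiff_coe_torusChar k (n := 1)).differentiable one_ne_zero x) ?_
  have hupdate (t : ℝ) : (torusChar k (Function.update x i t) : ℂ) =
      torusChar k x * 𝐞 (k i * (t - x i)) := by
    rw [← torusChar_single, ← Circle.coe_mul, ← torusChar_add_right]
    congr 2
    ext j
    rcases eq_or_ne j i with rfl | hj <;> simp [*]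
  have hphase : HasDerivAt (fun t => k i * (t - x i)) (k i : ℝ) (x i) := by
    simpa using ((hasDerivAt_id (x i)).sub_const (x i)).const_mul (k i : ℝ)
  have hderiv := ((hasDerivAt_fourierChar 0).scomp_of_eq (x i) hphase (by simp)).const_mul
    (torusChar k x : ℂ)
  simp only [hupdate]
  refine hderiv.congr_deriv ?_
  simp
  ring

lemma coordLaplacian_torusChar (k : ι → ℤ) (x : ι → ℝ) :
    coordLaplacian (fun y => (torusChar k y : ℂ)) x =
      -(∑ i, (2 * π * k i) ^ 2 : ℝ) * torusChar k x := by
  have hdiff : Differentiable ℝ fun y => (torusChar k y : ℂ) :=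
    (contDiff_coe_torusChar k (n := 1)).differentiable one_ne_zero
  have hsecond (i : ι) : partialDeriv i (partialDeriv i fun y => (torusChar k y : ℂ)) x =
      -(2 * π * k i) ^ 2 * torusChar k x := by
    calc _ = fderiv ℝ (fun y => (2 * π * k i * Complex.I) * (torusChar k y : ℂ)) x
          (Pi.single i 1) := by rw [partialDeriv, funext (partialDeriv_torusChar k i)]
      _ = (2 * π * k i * Complex.I) * partialDeriv i (fun y => (torusChar k y : ℂ)) x := by
        rw [fderiv_const_mul (hdiff x)]; rfl
      _ = (2 * π * k i) ^ 2 * Complex.I ^ 2 * torusChar k x := by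
        rw [partialDeriv_torusChar]; ring
      _ = _ := by rw [Complex.I_sq]; ring
  simp only [coordLaplacian, hsecond, ← Finset.sum_mul, Finset.sum_neg_distrib]
  push_cast
  rfl

end TorusChar

lemma exists_continuousMap_unitAddTorus {ι X : Type*} [Finite ι] [TopologicalSpace X]
    {f : (ι → ℝ) → X} (hf : Continuous f)
    (hper : ∀ x (m : ι → ℤ), f (x + fun i => (m i : ℝ)) = f x) :
    ∃ F : C(UnitAddTorus ι, X), ∀ x : ι → ℝ, F (fun i => (x i : UnitAddCircle)) = f x := by
  let q : C(ι → ℝ, UnitAddTorus ι) :=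
    ⟨Pi.map fun _ t => (t : UnitAddCircle), Continuous.piMap fun _ => AddCircle.continuous_mk' 1⟩
  have hq : Topology.IsQuotientMap q :=
    (IsOpenQuotientMap.piMap fun _ => QuotientAddGroup.isOpenQuotientMap_mk).isQuotientMap
  have hfactors : Function.FactorsThrough f q := by
    intro x y hxy
    have hint (i : ι) : ∃ m : ℤ, y i + m = x i := by
      have hxyi : (x i : UnitAddCircle) = y i := congrFun hxy i
      rw [← sub_eq_zero, ← AddCircle.coe_sub, AddCircle.coe_eq_zero_iff] at hxyi
      obtain ⟨m, hm⟩ := hxyi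
      exact ⟨m, by rw [zsmul_eq_mul, mul_one] at hm; linarith⟩
    choose m hm using hint
    rw [← hper y m]
    exact congrArg f (funext fun i => (hm i).symm)
  exact ⟨hq.lift ⟨f, hf⟩ hfactors, DFunLike.congr_fun (hq.lift_comp ⟨f, hf⟩ hfactors)⟩

lemma abs_le_floor_of_sum_sq_eq {ι : Type*} [Fintype ι] {K : ι → ℤ} {lam : ℝ} (hlam : 0 ≤ lam)
    (hK : ∑ i, (2 * π * K i) ^ 2 = lam ^ 2) (i : ι) : |K i| ≤ ⌊lam⌋₊ := by
  have hi : (2 * π * K i) ^ 2 ≤ lam ^ 2 :=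
    (Finset.single_le_sum (f := fun i => (2 * π * (K i : ℝ)) ^ 2) (fun _ _ => sq_nonneg _)
      (Finset.mem_univ i)).trans hK.le
  have habs : 2 * π * |(K i : ℝ)| ≤ lam := by
    simpa [abs_mul, abs_of_pos pi_pos] using abs_le_of_sq_le_sq hi hlam
  have hle : |(K i : ℝ)| ≤ lam := by nlinarith [abs_nonneg (K i : ℝ), pi_gt_three]
  have hnat : (K i).natAbs ≤ ⌊lam⌋₊ := Nat.le_floor (by rwa [Nat.cast_natAbs, Int.cast_abs])
  rw [Int.abs_eq_natAbs]
  exact_mod_cast hnat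

/-- A real eigenfunction of the Laplacian on the torus `ℝ^ι / ℤ^ι` with eigenvalue `lam ^ 2`, as a
periodic function on `ι → ℝ`; the zero function is allowed. -/
structure IsTorusEigenfunction {ι : Type*} [Fintype ι] [DecidableEq ι] (lam : ℝ)
    (ψ : (ι → ℝ) → ℝ) : Prop where
  contDiff : ContDiff ℝ 2 ψ
  periodic : ∀ x (m : ι → ℤ), ψ (x + fun i => (m i : ℝ)) = ψ x
  coordLaplacian_eq : ∀ x, coordLaplacian ψ x = -lam ^ 2 * ψ x

namespace IsTorusEigenfunction

variable {k : ℕ} {lam : ℝ} {ψ : (Fin (k + 1) → ℝ) → ℝ}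

lemma integral_smul_torusChar_eq_zero (hψ : IsTorusEigenfunction lam ψ) {K : Fin (k + 1) → ℤ}
    (hK : ∑ i, (2 * π * K i) ^ 2 ≠ lam ^ 2) :
    ∫ x in Icc 0 1, ψ x • (torusChar K x : ℂ) = 0 := by
  have hunit (x : Fin (k + 1) → ℝ) (i : Fin (k + 1)) : Function.update x i 1 =
      Function.update x i 0 + fun j => ((Pi.single i 1 : Fin (k + 1) → ℤ) j : ℝ) := by
    ext j
    rcases eq_or_ne j i with rfl | hj <;> simp [*]
  have hface (i : Fin (k + 1)) (x : Fin (k + 1) → ℝ) :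
      greenFlux ψ (fun y => (torusChar K y : ℂ)) i (Function.update x i 1) =
        greenFlux ψ (fun y => (torusChar K y : ℂ)) i (Function.update x i 0) := by
    simp only [greenFlux, hunit, partialDeriv_torusChar, torusChar_add_int, hψ.periodic,
      partialDeriv_add_period fun y => hψ.periodic y (Pi.single i 1)]
  have hgreen := integral_Icc_coordLaplacian_smul_sub_eq_zero hψ.contDiff
    (contDiff_coe_torusChar K) zero_le_one hface
  have hintegrand (x : Fin (k + 1) → ℝ) : coordLaplacian ψ x • (torusChar K x : ℂ) -
      ψ x • coordLaplacian (fun y => (torusChar K y : ℂ)) x =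
        (∑ i, (2 * π * K i) ^ 2 - lam ^ 2) • (ψ x • (torusChar K x : ℂ)) := by
    rw [hψ.coordLaplacian_eq, coordLaplacian_torusChar]
    simp only [Complex.real_smul]
    push_cast
    ring
  simp only [hintegrand, integral_smul] at hgreen
  exact (smul_eq_zero.1 hgreen).resolve_left (sub_ne_zero.2 hK)

lemma mFourierCoeff_eq_zero (hψ : IsTorusEigenfunction lam ψ)
    {F : C(UnitAddTorus (Fin (k + 1)), ℂ)}
    (hF : ∀ x : Fin (k + 1) → ℝ, F (fun i => (x i : UnitAddCircle)) = ψ x)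
    {K : Fin (k + 1) → ℤ} (hK : ∑ i, (2 * π * K i) ^ 2 ≠ lam ^ 2) :
    UnitAddTorus.mFourierCoeff F K = 0 := by
  have hbox : {x : Fin (k + 1) → ℝ | ∀ i, x i ∈ Ioc ((0 : Fin (k + 1) → ℝ) i)
      ((0 : Fin (k + 1) → ℝ) i + 1)} = univ.pi fun i => Ioc ((0 : Fin (k + 1) → ℝ) i)
      ((1 : Fin (k + 1) → ℝ) i) := by
    ext x; simp [Set.mem_pi]
  have hneg : ∑ i, (2 * π * (-K) i) ^ 2 ≠ lam ^ 2 := by simpa using hK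
  rw [UnitAddTorus.mFourierCoeff_eq_integral F K 0, hbox, volume_pi,
    setIntegral_congr_set Measure.univ_pi_Ioc_ae_eq_Icc, ← volume_pi,
    ← hψ.integral_smul_torusChar_eq_zero hneg]
  simp only [hF, mFourier_coe, Complex.real_smul, smul_eq_mul, mul_comm]

lemma exists_eq_trigSum (hψ : IsTorusEigenfunction lam ψ) (hlam : 0 ≤ lam) :
    ∃ (S : Finset (Fin (k + 1) → ℤ)) (c : S → ℂ),
      (∀ K ∈ S, ∑ i, (2 * π * K i) ^ 2 = lam ^ 2) ∧
        ∀ x, (ψ x : ℂ) = trigSum (fun K : S => K) c x := by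
  classical
  obtain ⟨F, hF⟩ := exists_continuousMap_unitAddTorus
    (Complex.continuous_ofReal.comp hψ.contDiff.continuous) fun x m => by
      simp only [Function.comp, hψ.periodic]
  let S : Finset (Fin (k + 1) → ℤ) :=
    {K ∈ Fintype.piFinset fun _ => Finset.Icc (-(⌊lam⌋₊ : ℤ)) ⌊lam⌋₊ |
      ∑ i, (2 * π * (K i : ℝ)) ^ 2 = lam ^ 2}
  have hS {K : Fin (k + 1) → ℤ} (hKS : K ∉ S) : UnitAddTorus.mFourierCoeff F K = 0 := by
    refine hψ.mFourierCoeff_eq_zero hF fun hK => hKS ?_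
    simp only [S, Finset.mem_filter, Fintype.mem_piFinset, Finset.mem_Icc]
    exact ⟨fun i => abs_le.1 (abs_le_floor_of_sum_sq_eq hlam hK i), hK⟩
  refine ⟨S, fun K => UnitAddTorus.mFourierCoeff F K, fun K hK => (Finset.mem_filter.1 hK).2,
    fun x => ?_⟩
  have hseries := UnitAddTorus.hasSum_mFourier_series_apply_of_summable
    (summable_of_ne_finset_zero (s := S) fun K => hS) (fun i => (x i : UnitAddCircle))
  have hfinite := hasSum_sum_of_ne_finset_zero (s := S) (L := .unconditional _)
    (f := fun K => UnitAddTorus.mFourierCoeff F K •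
      UnitAddTorus.mFourier K (fun i => (x i : UnitAddCircle)))
    fun K hK => by rw [hS hK, zero_smul]
  calc (ψ x : ℂ) = F (fun i => (x i : UnitAddCircle)) := (hF x).symm
    _ = _ := hseries.unique hfinite
    _ = _ := by
      simp only [mFourier_coe, smul_eq_mul]
      exact (Finset.sum_coe_sort S fun K => UnitAddTorus.mFourierCoeff F K * torusChar K x).symm

lemma two_pi_le (hψ : IsTorusEigenfunction lam ψ) (hlam : 0 < lam) (hne : ∃ x, ψ x ≠ 0) :
    2 * π ≤ lam := by
  obtain ⟨S, c, hS, hsum⟩ := hψ.exists_eq_trigSum hlam.le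
  obtain ⟨K, hKS⟩ : S.Nonempty := by
    obtain ⟨x, hx⟩ := hne
    rw [Finset.nonempty_iff_ne_empty]
    rintro rfl
    exact hx (by simpa [trigSum] using hsum x)
  obtain ⟨i, hi⟩ : ∃ i, K i ≠ 0 := by
    by_contra! hzero
    exact (pow_pos hlam 2).ne (by simpa [hzero] using hS K hKS)
  have hone : (1 : ℝ) ≤ (K i : ℝ) ^ 2 := by
    have hsq : 0 < K i ^ 2 := by positivity
    exact_mod_cast hsq
  refine le_of_sq_le_sq ?_ hlam.le
  calc (2 * π) ^ 2 ≤ (2 * π) ^ 2 * (K i : ℝ) ^ 2 := le_mul_of_one_le_right (sq_nonneg _) hone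
    _ = (2 * π * K i) ^ 2 := by ring
    _ ≤ ∑ i, (2 * π * K i) ^ 2 :=
      Finset.single_le_sum (f := fun i => (2 * π * (K i : ℝ)) ^ 2) (fun _ _ => sq_nonneg _)
        (Finset.mem_univ i)
    _ = lam ^ 2 := hS K hKS

end IsTorusEigenfunction

/-! ### A relative isoperimetric inequality in the unit cube -/

section UnitCube

variable {ι : Type*}

/-- The half-open unit cube `[0,1)^ι`. -/
def unitCube (ι : Type*) : Set (ι → ℝ) := univ.pi fun _ => Ico 0 1

lemma measurableSet_unitCube [Countable ι] : MeasurableSet (unitCube ι) :=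
  MeasurableSet.univ_pi fun _ => measurableSet_Ico

variable [Fintype ι]

lemma torusMeasure_eq_restrict : torusMeasure ι = volume.restrict (unitCube ι) := by
  rw [unitCube, volume_pi, Measure.restrict_pi_pi]
  rfl

lemma torusMeasure_le_volume : torusMeasure ι ≤ volume := by
  rw [torusMeasure_eq_restrict]
  exact Measure.restrict_le_self

lemma torusMeasure_unitCube_inter {s : Set (ι → ℝ)} (hs : MeasurableSet s) :
    torusMeasure ι (unitCube ι ∩ s) = torusMeasure ι s := by
  rw [torusMeasure_eq_restrict, Measure.restrict_apply hs,
    Measure.restrict_apply (measurableSet_unitCube.inter hs), inter_right_comm, inter_self,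
    inter_comm]

end UnitCube

lemma measurePreserving_piecewise {ι : Type*} [Fintype ι] {X : ι → Type*}
    [∀ i, MeasurableSpace (X i)] (μ : ∀ i, Measure (X i)) [∀ i, IsProbabilityMeasure (μ i)]
    (S : Set ι) [DecidablePred (· ∈ S)] :
    MeasurePreserving (fun z : (∀ i, X i) × (∀ i, X i) => S.piecewise z.1 z.2)
      ((Measure.pi μ).prod (Measure.pi μ)) (Measure.pi μ) := by
  have hmeas : Measurable fun z : (∀ i, X i) × (∀ i, X i) => S.piecewise z.1 z.2 := by
    refine measurable_pi_lambda _ fun i => ?_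
    by_cases hi : i ∈ S <;> simp only [hi, piecewise_eq_of_mem, piecewise_eq_of_notMem,
      not_false_eq_true] <;> fun_prop
  refine ⟨hmeas, (Measure.pi_eq fun s hs => ?_).symm⟩
  have hpreimage : (fun z : (∀ i, X i) × (∀ i, X i) => S.piecewise z.1 z.2) ⁻¹' univ.pi s =
      (univ.pi (S.piecewise s fun _ => univ)) ×ˢ (univ.pi (S.piecewise (fun _ => univ) s)) := by
    ext z
    simp only [mem_preimage, mem_univ_pi, mem_prod, ← forall_and]
    refine forall_congr' fun i => ?_
    by_cases hi : i ∈ S <;> simp [hi]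
  rw [Measure.map_apply hmeas (MeasurableSet.univ_pi hs), hpreimage, Measure.prod_prod,
    Measure.pi_pi, Measure.pi_pi, ← Finset.prod_mul_distrib]
  refine Finset.prod_congr rfl fun i _ => ?_
  by_cases hi : i ∈ S <;> simp [hi]

section Isoperimetry

variable {k : ℕ} {f : (Fin (k + 1) → ℝ) → ℝ}

lemma exists_zero_of_sign_change (hf : Continuous f) {s : Fin (k + 1) → Set ℝ}
    (hs : ∀ i, Convex ℝ (s i)) {x y : Fin (k + 1) → ℝ} (hx : x ∈ univ.pi s) (hy : y ∈ univ.pi s)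
    (hfx : 0 ≤ f x) (hfy : f y ≤ 0) :
    ∃ j, ∃ z ∈ univ.pi s, f z = 0 ∧ ∀ l ≠ j, z l = (Iio j).piecewise x y l := by
  -- The path from `y` to `x` that moves the coordinates one after the other.
  let path (t : ℝ) (i : Fin (k + 1)) : ℝ := AffineMap.lineMap (y i) (x i) (max 0 (min 1 (t - i)))
  have path_before {t : ℝ} {i : Fin (k + 1)} (h : t ≤ i) : path t i = y i := by
    simp [path, min_eq_right (by linarith : t - i ≤ 1), h]
  have path_after {t : ℝ} {i : Fin (k + 1)} (h : i + 1 ≤ t) : path t i = x i := by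
    simp [path, min_eq_left (by linarith : 1 ≤ t - i)]
  have hpath : Continuous path := continuous_pi fun i => by
    simp only [path, AffineMap.lineMap_apply_module]
    fun_prop
  have hstart : path 0 = y := funext fun i => path_before (Nat.cast_nonneg _)
  have hend : path (k + 1) = x := funext fun i =>
    path_after (by exact_mod_cast Nat.succ_le_of_lt i.2)
  obtain ⟨t, ht, hzero⟩ := intermediate_value_Icc (by positivity : (0 : ℝ) ≤ k + 1)
    (hf.comp hpath).continuousOn (show (0 : ℝ) ∈ Icc _ _ by simp [hstart, hend, hfx, hfy])
  refine ⟨⟨min ⌊t⌋₊ k, by omega⟩, path t, fun i _ => ?_, hzero, fun l hl => ?_⟩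
  · exact (hs i).lineMap_mem (hy i trivial) (hx i trivial)
      ⟨le_max_left _ _, max_le zero_le_one (min_le_left _ _)⟩
  rcases lt_or_gt_of_ne hl with hlt | hgt
  · have hl' : (l : ℕ) + 1 ≤ ⌊t⌋₊ := (Nat.succ_le_of_lt hlt).trans (min_le_left _ _)
    rw [piecewise_eq_of_mem _ _ _ (mem_Iio.2 hlt)]
    exact path_after (by exact_mod_cast (Nat.le_floor_iff ht.1).1 hl')
  · have hl' : ⌊t⌋₊ < l := (min_lt_iff.1 hgt).resolve_right (by omega)
    rw [piecewise_eq_of_notMem _ _ _ (mem_Iio.not.2 hgt.not_gt)]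
    exact path_before ((Nat.floor_lt ht.1).1 hl').le

lemma measurePreserving_removeNth (j : Fin (k + 1)) :
    MeasurePreserving (j.removeNth : (Fin (k + 1) → ℝ) → Fin k → ℝ)
      (torusMeasure (Fin (k + 1))) (torusMeasure (Fin k)) :=
  measurePreserving_snd.comp (measurePreserving_piFinSuccAbove (fun _ => circleMeasure) j)

lemma torusMeasure_nonneg_mul_nonpos_le (hf : Continuous f) :
    torusMeasure _ {x | 0 ≤ f x} * torusMeasure _ {x | f x ≤ 0} ≤
      ∑ j : Fin (k + 1), volume (j.removeNth '' {z ∈ unitCube _ | f z = 0}) := by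
  classical
  let proj (j : Fin (k + 1)) : Set (Fin k → ℝ) := j.removeNth '' {z ∈ unitCube _ | f z = 0}
  let mix (j : Fin (k + 1)) (z : (Fin (k + 1) → ℝ) × (Fin (k + 1) → ℝ)) : Fin k → ℝ :=
    j.removeNth ((Iio j).piecewise z.1 z.2)
  have hmix (j) : MeasurePreserving (mix j) ((torusMeasure _).prod (torusMeasure _))
      (torusMeasure _) :=
    (measurePreserving_removeNth j).comp (measurePreserving_piecewise _ (Iio j))
  have hcover : (unitCube _ ∩ {x | 0 ≤ f x}) ×ˢ (unitCube _ ∩ {x | f x ≤ 0}) ⊆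
      ⋃ j, mix j ⁻¹' toMeasurable volume (proj j) := by
    rintro ⟨x, y⟩ ⟨⟨hx, hfx⟩, hy, hfy⟩
    obtain ⟨j, z, hz, hfz, hzj⟩ :=
      exists_zero_of_sign_change hf (fun _ => convex_Ico 0 1) hx hy hfx hfy
    refine mem_iUnion.2 ⟨j, subset_toMeasurable _ _ ⟨z, ⟨hz, hfz⟩, ?_⟩⟩
    exact funext fun l => hzj _ (Fin.succAbove_ne j l)
  calc _ = (torusMeasure _).prod (torusMeasure _)
        ((unitCube _ ∩ {x | 0 ≤ f x}) ×ˢ (unitCube _ ∩ {x | f x ≤ 0})) := by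
        rw [Measure.prod_prod,
          torusMeasure_unitCube_inter (measurableSet_le measurable_const hf.measurable),
          torusMeasure_unitCube_inter (measurableSet_le hf.measurable measurable_const)]
    _ ≤ ∑ j, (torusMeasure _).prod (torusMeasure _) (mix j ⁻¹' toMeasurable volume (proj j)) :=
        (measure_mono hcover).trans (measure_iUnion_fintype_le _ _)
    _ ≤ ∑ j, volume (proj j) := Finset.sum_le_sum fun j _ => by
        rw [(hmix j).measure_preimage (measurableSet_toMeasurable _ _).nullMeasurableSet]
        exact (torusMeasure_le_volume _).trans (measure_toMeasurable _).le

end Isoperimetry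

section EuclideanHausdorff

variable {ι : Type*} [Fintype ι] {d : ℝ}

/-- The `d`-dimensional Hausdorff measure of the Euclidean distance, as a measure on `ι → ℝ`,
whose own distance is the sup distance. -/
def euclideanHausdorff (ι : Type*) [Fintype ι] (d : ℝ) : Measure (ι → ℝ) :=
  (μH[d] : Measure (EuclideanSpace ℝ ι)).map WithLp.ofLp

lemma euclideanHausdorff_apply (s : Set (ι → ℝ)) :
    euclideanHausdorff ι d s = μH[d] (WithLp.ofLp ⁻¹' s : Set (EuclideanSpace ℝ ι)) :=
  (MeasurableEquiv.toLp 2 (ι → ℝ)).symm.map_apply s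

lemma volume_removeNth_image_le {k : ℕ} (j : Fin (k + 1)) (s : Set (Fin (k + 1) → ℝ)) :
    volume (j.removeNth '' s : Set (Fin k → ℝ)) ≤ euclideanHausdorff (Fin (k + 1)) k s := by
  have hproj : LipschitzWith 1
      (fun x l => x (j.succAbove l) : EuclideanSpace ℝ (Fin (k + 1)) → Fin k → ℝ) := by
    refine LipschitzWith.mk_one fun x y => (dist_pi_le_iff dist_nonneg).2 fun l => ?_
    simpa [dist_eq_norm] using PiLp.norm_apply_le (x - y) (j.succAbove l)
  have himage := hproj.hausdorffMeasure_image_le k.cast_nonneg (WithLp.ofLp ⁻¹' s)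
  have hvolume : (μH[(k : ℝ)] : Measure (Fin k → ℝ)) = volume := by
    simpa using hausdorffMeasure_pi_real (ι := Fin k)
  rw [hvolume, ENNReal.coe_one, ENNReal.one_rpow, one_mul, ← euclideanHausdorff_apply] at himage
  refine le_trans (measure_mono ?_) himage
  rintro _ ⟨x, hx, rfl⟩
  exact ⟨WithLp.toLp 2 x, hx, rfl⟩

theorem euclideanHausdorff_zeroSet_unitCube_ge {k : ℕ} {f : (Fin (k + 1) → ℝ) → ℝ}
    (hf : Continuous f) {κ : ℝ} (hκ : 0 ≤ κ) (hnonneg : κ ≤ (torusMeasure _).real {x | 0 ≤ f x})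
    (hnonpos : κ ≤ (torusMeasure _).real {x | f x ≤ 0}) :
    ENNReal.ofReal (κ ^ 2 / (k + 1)) ≤
      euclideanHausdorff (Fin (k + 1)) k {z ∈ unitCube _ | f z = 0} := by
  have hsum := calc ENNReal.ofReal (κ ^ 2)
      = ENNReal.ofReal κ * ENNReal.ofReal κ := by rw [← ENNReal.ofReal_mul hκ, sq]
    _ ≤ torusMeasure _ {x | 0 ≤ f x} * torusMeasure _ {x | f x ≤ 0} := by
        gcongr <;> exact ENNReal.ofReal_le_of_le_toReal ‹_›
    _ ≤ ∑ j : Fin (k + 1), volume (j.removeNth '' {z ∈ unitCube _ | f z = 0}) :=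
        torusMeasure_nonneg_mul_nonpos_le hf
    _ ≤ ∑ _ : Fin (k + 1), euclideanHausdorff (Fin (k + 1)) k {z ∈ unitCube _ | f z = 0} :=
        Finset.sum_le_sum fun j _ => volume_removeNth_image_le j _
    _ = (k + 1 : ℕ) * euclideanHausdorff (Fin (k + 1)) k {z ∈ unitCube _ | f z = 0} := by simp
  rw [ENNReal.ofReal_div_of_pos (by positivity)]
  refine ENNReal.div_le_of_le_mul' ?_
  rwa [← Nat.cast_succ, ENNReal.ofReal_natCast]

end EuclideanHausdorff

/-! ### Sign changes forced by an orthogonality relation -/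

section SignChange

variable {Ω : Type*} [MeasurableSpace Ω] {μ : Measure Ω} {f W : Ω → ℝ}

lemma sq_setIntegral_abs_le [IsFiniteMeasure μ] (hf : MemLp f 2 μ) {s : Set Ω}
    (hs : MeasurableSet s) : (∫ x in s, |f x| ∂μ) ^ 2 ≤ μ.real s * ∫ x, f x ^ 2 ∂μ := by
  have hind : MemLp (s.indicator fun _ => (1 : ℝ)) 2 μ := (memLp_const 1).indicator hs
  have hnonneg : 0 ≤ s.indicator (fun _ => (1 : ℝ)) := indicator_nonneg fun _ _ => zero_le_one
  have hholder := integral_mul_le_Lp_mul_Lq_of_nonneg (g := fun x => |f x|)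
    Real.HolderConjugate.two_two (Filter.Eventually.of_forall hnonneg)
    (Filter.Eventually.of_forall fun x => abs_nonneg (f x))
    (by simpa using hind) (by rw [ENNReal.ofReal_ofNat]; exact hf.abs)
  have hmul (x) : s.indicator (fun _ => (1 : ℝ)) x * |f x| = s.indicator (fun x => |f x|) x := by
    by_cases hx : x ∈ s <;> simp [hx]
  have hsq (x) : s.indicator (fun _ => (1 : ℝ)) x ^ 2 = s.indicator (fun _ => (1 : ℝ)) x := by
    by_cases hx : x ∈ s <;> simp [hx]
  simp only [hmul, integral_indicator hs, rpow_two, hsq, sq_abs, ← sqrt_eq_rpow,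
    setIntegral_const, smul_eq_mul, mul_one] at hholder
  calc (∫ x in s, |f x| ∂μ) ^ 2 ≤ (√(μ.real s) * √(∫ x, f x ^ 2 ∂μ)) ^ 2 := by
        gcongr
    _ = μ.real s * ∫ x, f x ^ 2 ∂μ := by
        rw [mul_pow, sq_sqrt measureReal_nonneg, sq_sqrt (integral_nonneg fun _ => sq_nonneg _)]

/-- `W` is a weight with values in `[0,1]`, at least `ρ` on `H`, to which `f` is orthogonal. -/
structure IsOrthogonalWeight (μ : Measure Ω) (H : Set Ω) (ρ : ℝ) (f W : Ω → ℝ) : Prop where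
  aestronglyMeasurable : AEStronglyMeasurable W μ
  mem_Icc : ∀ x, W x ∈ Icc 0 1
  le_of_mem : ∀ x ∈ H, ρ ≤ W x
  integral_mul_eq_zero : ∫ x, W x * f x ∂μ = 0

namespace IsOrthogonalWeight

variable {H : Set Ω} {ρ c : ℝ}

lemma mono {G : Set Ω} (hW : IsOrthogonalWeight μ H ρ f W) (hGH : G ⊆ H) :
    IsOrthogonalWeight μ G ρ f W :=
  ⟨hW.1, hW.2, fun x hx => hW.3 x (hGH hx), hW.4⟩

protected lemma neg (hW : IsOrthogonalWeight μ H ρ f W) :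
    IsOrthogonalWeight μ H ρ (fun x => -f x) W :=
  ⟨hW.1, hW.2, hW.3, by simp [integral_neg, hW.integral_mul_eq_zero]⟩

lemma integrable_mul (hW : IsOrthogonalWeight μ H ρ f W) {g : Ω → ℝ} (hg : Integrable g μ) :
    Integrable (fun x => W x * g x) μ :=
  hg.bdd_mul (c := 1) hW.aestronglyMeasurable (Filter.Eventually.of_forall fun x => by
    rw [norm_of_nonneg (hW.mem_Icc x).1]; exact (hW.mem_Icc x).2)

lemma integral_mul_abs_le (hW : IsOrthogonalWeight μ H ρ f W) (hf : Integrable f μ)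
    (hpos : MeasurableSet {x | 0 ≤ f x}) :
    ∫ x, W x * |f x| ∂μ ≤ 2 * ∫ x in {x | 0 ≤ f x}, |f x| ∂μ := by
  have hWf := hW.integrable_mul hf
  have hWabs := hW.integrable_mul hf.abs
  calc ∫ x, W x * |f x| ∂μ = ∫ x, (W x * |f x| + W x * f x) ∂μ := by
        rw [integral_add hWabs hWf, hW.integral_mul_eq_zero, add_zero]
    _ ≤ ∫ x, {x | 0 ≤ f x}.indicator (fun x => 2 * |f x|) x ∂μ := by
        refine integral_mono (hWabs.add hWf) ((hf.abs.const_mul 2).indicator hpos) fun x => ?_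
        rcases le_total 0 (f x) with hx | hx
        · rw [indicator_of_mem (s := {x | 0 ≤ f x}) hx, abs_of_nonneg hx]
          nlinarith [(hW.mem_Icc x).2]
        · simp only [abs_of_nonpos hx, mul_neg, neg_add_cancel]
          exact indicator_nonneg (fun y _ => by positivity) x
    _ = 2 * ∫ x in {x | 0 ≤ f x}, |f x| ∂μ := by rw [integral_indicator hpos, integral_const_mul]

lemma mul_sqrt_integral_sq_mul_measureReal_le [IsFiniteMeasure μ]
    (hW : IsOrthogonalWeight μ H ρ f W) (hf : Integrable f μ) (hH : MeasurableSet H) (hc : 0 ≤ c)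
    (hHf : ∀ x ∈ H, ∫ y, f y ^ 2 ∂μ ≤ c * f x ^ 2) :
    ρ * √(∫ y, f y ^ 2 ∂μ) * μ.real H ≤ √c * ∫ x, W x * |f x| ∂μ := by
  have hWabs := (hW.integrable_mul hf.abs).const_mul √c
  have hbound (x) (hx : x ∈ H) : ρ * √(∫ y, f y ^ 2 ∂μ) ≤ √c * (W x * |f x|) :=
    calc ρ * √(∫ y, f y ^ 2 ∂μ) ≤ W x * √(c * f x ^ 2) := by
          gcongr
          exacts [(hW.mem_Icc x).1, hW.le_of_mem x hx, hHf x hx]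
      _ = √c * (W x * |f x|) := by rw [sqrt_mul hc, sqrt_sq_eq_abs]; ring
  rw [← integral_const_mul]
  calc _ ≤ ∫ x in H, √c * (W x * |f x|) ∂μ :=
        setIntegral_ge_of_const_le_real hH (measure_ne_top _ _) hbound hWabs.integrableOn
    _ ≤ _ := setIntegral_le_integral hWabs (Filter.Eventually.of_forall fun x =>
        mul_nonneg (sqrt_nonneg _) (mul_nonneg (hW.mem_Icc x).1 (abs_nonneg _)))

/-- Orthogonality to the weight `W` forces both signs of `f` to contribute equally to `∫ W |f|`,
which is bounded below by the contribution of `H` and above, by Cauchy–Schwarz, through the measure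
of the set `{0 ≤ f}`. -/
lemma sq_mul_measureReal_le [IsProbabilityMeasure μ]
    (hW : IsOrthogonalWeight μ H ρ f W) (hρ : 0 ≤ ρ) (hH : MeasurableSet H) (hf : MemLp f 2 μ)
    (hpos : MeasurableSet {x | 0 ≤ f x}) (hc : 1 ≤ c)
    (hHf : ∀ x ∈ H, ∫ y, f y ^ 2 ∂μ ≤ c * f x ^ 2) :
    (ρ * μ.real H) ^ 2 ≤ 4 * c * μ.real {x | 0 ≤ f x} := by
  have hfi : Integrable f μ := hf.integrable one_le_two
  have hI : 0 ≤ ∫ y, f y ^ 2 ∂μ := integral_nonneg fun _ => sq_nonneg _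
  have hlower := hW.mul_sqrt_integral_sq_mul_measureReal_le hfi hH (by linarith) hHf
  rcases hI.eq_or_lt with hzero | hpos'
  · have hfull : {x | 0 ≤ f x} ∈ ae μ :=
      ((integral_eq_zero_iff_of_nonneg (fun x => sq_nonneg _) hf.integrable_sq).1 hzero.symm).mono
        fun x hx => (pow_eq_zero_iff two_ne_zero).1 hx |>.ge
    have hle : ρ * μ.real H ≤ 1 := by
      rcases H.eq_empty_or_nonempty with rfl | ⟨x, hx⟩
      · simp
      · exact mul_le_one₀ ((hW.le_of_mem x hx).trans (hW.mem_Icc x).2) measureReal_nonneg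
          measureReal_le_one
    have hone : μ.real {x | 0 ≤ f x} = 1 := by
      rw [measureReal_def, (mem_ae_iff_prob_eq_one hpos).1 hfull, ENNReal.toReal_one]
    rw [hone]
    nlinarith [pow_le_one₀ (mul_nonneg hρ measureReal_nonneg) hle (n := 2)]
  refine le_of_mul_le_mul_right ?_ hpos'
  calc (ρ * μ.real H) ^ 2 * ∫ y, f y ^ 2 ∂μ = (ρ * √(∫ y, f y ^ 2 ∂μ) * μ.real H) ^ 2 := by
        rw [mul_right_comm, mul_pow _ (√_), sq_sqrt hI]
    _ ≤ (√c * (2 * ∫ x in {x | 0 ≤ f x}, |f x| ∂μ)) ^ 2 := by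
        refine pow_le_pow_left₀ (by positivity) (hlower.trans ?_) 2
        gcongr
        exact hW.integral_mul_abs_le hfi hpos
    _ = 4 * c * (∫ x in {x | 0 ≤ f x}, |f x| ∂μ) ^ 2 := by
        rw [mul_pow, sq_sqrt (by linarith)]; ring
    _ ≤ 4 * c * (μ.real {x | 0 ≤ f x} * ∫ y, f y ^ 2 ∂μ) := by
        gcongr; exact sq_setIntegral_abs_le hf hpos
    _ = _ := by ring

end IsOrthogonalWeight

end SignChange

/-! ### Weights orthogonal to an eigenfunction -/

section SinSqBump

variable {ι : Type*}

/-- The closed cube of side `1/2` with the same centre as the unit cube. -/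
def halfCube (ι : Type*) : Set (ι → ℝ) := univ.pi fun _ => Icc (1 / 4) (3 / 4)

/-- The bump function `∏ j ∈ s, sin² (π x_j)`. The full product vanishes to second order on the
boundary of the unit cube. -/
def sinSqProd (s : Finset ι) (x : ι → ℝ) : ℝ := ∏ j ∈ s, sin (π * x j) ^ 2

lemma sinSqProd_mem_Icc (s : Finset ι) (x : ι → ℝ) : sinSqProd s x ∈ Icc 0 1 :=
  ⟨Finset.prod_nonneg fun _ _ => sq_nonneg _,
    Finset.prod_le_one (fun _ _ => sq_nonneg _) fun _ _ => sin_sq_le_one _⟩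

lemma pow_le_sinSqProd {x : ι → ℝ} (hx : x ∈ halfCube ι) (s : Finset ι) :
    (1 / 2) ^ s.card ≤ sinSqProd s x := by
  rw [← Finset.prod_const]
  refine Finset.prod_le_prod (fun _ _ => by norm_num) fun j _ => ?_
  have hcos : cos (2 * (π * x j)) ≤ 0 :=
    cos_nonpos_of_pi_div_two_le_of_le (by nlinarith [(hx j trivial).1, pi_pos])
      (by nlinarith [(hx j trivial).2, pi_pos])
  rw [sin_sq_eq_half_sub]
  linarith

variable [Fintype ι]

lemma contDiff_sinSqProd (s : Finset ι) {n : WithTop ℕ∞} : ContDiff ℝ n (sinSqProd s) := by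
  unfold sinSqProd
  fun_prop

variable [DecidableEq ι]

/-- The function `Δv + Λ² v`, where `v = ∏ j, sin² (π x_j)`, divided by its largest possible value
when `Λ² ≤ 16 n π²` in dimension `n`. -/
def bumpWeight (Λ : ℝ) (x : ι → ℝ) : ℝ :=
  (coordLaplacian (sinSqProd Finset.univ) x + Λ ^ 2 * sinSqProd Finset.univ x) /
    (14 * Fintype.card ι * π ^ 2)

lemma sinSqProd_update (x : ι → ℝ) (i : ι) (t : ℝ) :
    sinSqProd Finset.univ (Function.update x i t) =
      sin (π * t) ^ 2 * sinSqProd (Finset.univ.erase i) x := by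
  rw [sinSqProd, ← Finset.mul_prod_erase _ _ (Finset.mem_univ i), Function.update_self]
  congr 1
  exact Finset.prod_congr rfl fun j hj => by rw [Function.update_of_ne (Finset.ne_of_mem_erase hj)]

lemma sinSqProd_erase_update (x : ι → ℝ) (i : ι) (t : ℝ) :
    sinSqProd (Finset.univ.erase i) (Function.update x i t) = sinSqProd (Finset.univ.erase i) x :=
  Finset.prod_congr rfl fun j hj => by rw [Function.update_of_ne (Finset.ne_of_mem_erase hj)]

lemma partialDeriv_sinSqProd (i : ι) (x : ι → ℝ) : partialDeriv i (sinSqProd Finset.univ) x =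
    π * sin (2 * (π * x i)) * sinSqProd (Finset.univ.erase i) x := by
  refine partialDeriv_eq_of_hasDerivAt_update
    ((contDiff_sinSqProd _ (n := 1)).differentiable one_ne_zero x) ?_
  simp only [sinSqProd_update]
  refine HasDerivAt.mul_const ?_ _
  convert ((hasDerivAt_const_mul π).sin.fun_pow 2) using 1
  rw [sin_two_mul]
  ring

lemma partialDeriv_partialDeriv_sinSqProd (i : ι) (x : ι → ℝ) :
    partialDeriv i (partialDeriv i (sinSqProd Finset.univ)) x =
      2 * π ^ 2 * sinSqProd (Finset.univ.erase i) x - 4 * π ^ 2 * sinSqProd Finset.univ x := by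
  have hsplit := sinSqProd_update x i (x i)
  rw [Function.update_eq_self] at hsplit
  refine partialDeriv_eq_of_hasDerivAt_update ((contDiff_partialDeriv (contDiff_sinSqProd _)
    (m := 1) (n := 2) (by norm_num) i).differentiable one_ne_zero x) ?_
  simp only [partialDeriv_sinSqProd, Function.update_self, sinSqProd_erase_update]
  rw [hsplit, ← mul_assoc, ← sub_mul]
  refine HasDerivAt.mul_const ?_ _
  convert (((hasDerivAt_const_mul π).const_mul 2).sin.const_mul π) using 1
  rw [cos_two_mul, cos_sq']
  ring

lemma bumpWeight_eq (Λ : ℝ) (x : ι → ℝ) : bumpWeight Λ x =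
    (2 * π ^ 2 * ∑ i, sinSqProd (Finset.univ.erase i) x +
      (Λ ^ 2 - 4 * Fintype.card ι * π ^ 2) * sinSqProd Finset.univ x) /
        (14 * Fintype.card ι * π ^ 2) := by
  simp only [bumpWeight, coordLaplacian, partialDeriv_partialDeriv_sinSqProd,
    Finset.sum_sub_distrib, ← Finset.mul_sum, Finset.sum_const, Finset.card_univ, nsmul_eq_mul]
  ring

lemma bumpWeight_mem_Icc {Λ : ℝ} (hΛ : Λ ^ 2 ∈ Icc (4 * Fintype.card ι * π ^ 2)
    (16 * Fintype.card ι * π ^ 2)) (x : ι → ℝ) : bumpWeight Λ x ∈ Icc 0 1 := by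
  have hsum0 : 0 ≤ ∑ i, sinSqProd (Finset.univ.erase i) x :=
    Finset.sum_nonneg fun i _ => (sinSqProd_mem_Icc _ x).1
  have hsum1 : ∑ i, sinSqProd (Finset.univ.erase i) x ≤ Fintype.card ι := by
    simpa using Finset.sum_le_card_nsmul Finset.univ (fun i => sinSqProd (Finset.univ.erase i) x) 1
      fun i _ => (sinSqProd_mem_Icc _ x).2
  obtain ⟨hv0, hv1⟩ := sinSqProd_mem_Icc Finset.univ x
  rw [bumpWeight_eq]
  refine ⟨div_nonneg (add_nonneg (by positivity) (mul_nonneg (sub_nonneg.2 hΛ.1) hv0))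
    (by positivity), div_le_one_of_le₀ ?_ (by positivity)⟩
  nlinarith [mul_le_of_le_one_right (sub_nonneg.2 hΛ.1) hv1, hΛ.2, sq_nonneg π]

lemma le_bumpWeight {Λ : ℝ} [Nonempty ι] (hΛ : 4 * Fintype.card ι * π ^ 2 ≤ Λ ^ 2) {x : ι → ℝ}
    (hx : x ∈ halfCube ι) : (1 / 2) ^ Fintype.card ι / 7 ≤ bumpWeight Λ x := by
  have hsum : Fintype.card ι * (1 / 2) ^ Fintype.card ι ≤
      ∑ i, sinSqProd (Finset.univ.erase i) x := by
    rw [← nsmul_eq_mul]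
    refine Finset.card_nsmul_le_sum _ _ _ fun i _ => le_trans ?_ (pow_le_sinSqProd hx _)
    exact pow_le_pow_of_le_one (by norm_num) (by norm_num) (Finset.card_le_univ _)
  have hv := mul_nonneg (sub_nonneg.2 hΛ) (sinSqProd_mem_Icc Finset.univ x).1
  rw [bumpWeight_eq, div_le_div_iff₀ (by norm_num) (by positivity)]
  nlinarith [mul_le_mul_of_nonneg_left hsum (sq_nonneg π)]

end SinSqBump

section Orthogonality

variable {k : ℕ} {u : (Fin (k + 1) → ℝ) → ℝ} {Λ : ℝ}

lemma continuous_bumpWeight : Continuous (bumpWeight Λ : (Fin (k + 1) → ℝ) → ℝ) := by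
  simp only [funext (bumpWeight_eq Λ)]
  have h (s : Finset (Fin (k + 1))) := (contDiff_sinSqProd s (n := 0)).continuous
  fun_prop

lemma torusMeasure_eq_restrict_Icc {ι : Type*} [Fintype ι] :
    torusMeasure ι = volume.restrict (Icc 0 1) := by
  rw [torusMeasure_eq_restrict, unitCube, volume_pi]
  exact Measure.restrict_congr_set Measure.univ_pi_Ico_ae_eq_Icc

lemma integral_bumpWeight_mul_eq_zero (hu : ContDiff ℝ 2 u)
    (hlap : ∀ x, coordLaplacian u x = -Λ ^ 2 * u x) :
    ∫ x, bumpWeight Λ x * u x ∂torusMeasure _ = 0 := by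
  have hflux (i : Fin (k + 1)) (x : Fin (k + 1) → ℝ) {t : ℝ} (ht : sin (π * t) = 0) :
      greenFlux (sinSqProd Finset.univ) u i (Function.update x i t) = 0 := by
    simp [greenFlux, partialDeriv_sinSqProd, sinSqProd_update, sin_two_mul, ht]
  have hgreen := integral_Icc_coordLaplacian_smul_sub_eq_zero (contDiff_sinSqProd _) hu
    zero_le_one fun i x => by
      rw [hflux i x (by simp), hflux i x (by simp)]
  rw [torusMeasure_eq_restrict_Icc]
  calc _ = ∫ x in Icc 0 1, (14 * (k + 1 : ℕ) * π ^ 2)⁻¹ *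
        (coordLaplacian (sinSqProd Finset.univ) x • u x -
          sinSqProd Finset.univ x • coordLaplacian u x) := by
        congr with x
        simp only [bumpWeight, hlap, smul_eq_mul, Fintype.card_fin]
        ring
    _ = 0 := by rw [integral_const_mul, hgreen, mul_zero]

lemma isOrthogonalWeight_bumpWeight (hu : ContDiff ℝ 2 u)
    (hlap : ∀ x, coordLaplacian u x = -Λ ^ 2 * u x)
    (hΛ : Λ ^ 2 ∈ Icc (4 * (k + 1) * π ^ 2) (16 * (k + 1) * π ^ 2)) :
    IsOrthogonalWeight (torusMeasure _) (halfCube _) ((1 / 2) ^ (k + 1) / 7) u (bumpWeight Λ) where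
  aestronglyMeasurable := continuous_bumpWeight.aestronglyMeasurable
  mem_Icc := bumpWeight_mem_Icc (by simpa using hΛ)
  le_of_mem x hx := by simpa using le_bumpWeight (by simpa using hΛ.1) hx
  integral_mul_eq_zero := integral_bumpWeight_mul_eq_zero hu hlap

end Orthogonality

/-! ### Subdivision of the unit cube -/

section Grid

variable {ι : Type*} {m : ℕ}

/-- The similarity that maps the unit cube onto the cell with lower corner `j / m` of the
subdivision of the unit cube into cells of side `1 / m`. -/
def gridMap (m : ℕ) (j : ι → Fin m) (x : ι → ℝ) : ι → ℝ := (m : ℝ)⁻¹ • ((fun i => (j i : ℝ)) + x)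

lemma gridMap_mem_unitCube (j : ι → Fin m) {x : ι → ℝ} (hx : x ∈ unitCube ι) :
    gridMap m j x ∈ unitCube ι := fun i _ => by
  have hj : (j i : ℝ) + 1 ≤ m := by exact_mod_cast (j i).2
  obtain ⟨hx0, hx1⟩ := hx i trivial
  exact ⟨mul_nonneg (by positivity) (add_nonneg (by positivity) hx0),
    (inv_mul_lt_one₀ (by linarith [(j i : ℕ).cast_nonneg (α := ℝ)])).2 (by dsimp; linarith)⟩

lemma eq_of_gridMap_eq (hm : m ≠ 0) {j j' : ι → Fin m} {x y : ι → ℝ} (hx : x ∈ unitCube ι)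
    (hy : y ∈ unitCube ι) (h : gridMap m j x = gridMap m j' y) : j = j' := by
  ext i
  have hi : (j i : ℝ) + x i = j' i + y i :=
    congrFun (smul_right_injective (ι → ℝ) (inv_ne_zero (Nat.cast_ne_zero.2 hm)) h) i
  have hlt : (j i : ℝ) < j' i + 1 := by linarith [(hx i trivial).1, (hy i trivial).2]
  have hgt : (j' i : ℝ) < j i + 1 := by linarith [(hx i trivial).2, (hy i trivial).1]
  norm_cast at hlt hgt
  omega

lemma continuous_gridMap (j : ι → Fin m) : Continuous (gridMap m j) := by
  unfold gridMap
  fun_prop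

lemma antilipschitzWith_inv_smul_add {E : Type*} [NormedAddCommGroup E] [NormedSpace ℝ E]
    (hm : m ≠ 0) (v : E) : AntilipschitzWith m fun x : E => (m : ℝ)⁻¹ • (v + x) := by
  refine AntilipschitzWith.of_le_mul_dist fun x y => ?_
  rw [dist_smul₀, dist_add_left, Real.norm_of_nonneg (by positivity), NNReal.coe_natCast,
    mul_inv_cancel_left₀ (Nat.cast_ne_zero.2 hm)]

lemma hausdorffMeasure_preimage_inv_smul_add_le {E : Type*} [NormedAddCommGroup E]
    [NormedSpace ℝ E] [MeasurableSpace E] [BorelSpace E] (hm : m ≠ 0) (v : E) (d : ℕ) (s : Set E) :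
    μH[d] ((fun x : E => (m : ℝ)⁻¹ • (v + x)) ⁻¹' s) ≤ m ^ d * μH[d] s := by
  have hpreimage :=
    (antilipschitzWith_inv_smul_add hm v).hausdorffMeasure_preimage_le d.cast_nonneg s
  rwa [ENNReal.coe_natCast, ENNReal.rpow_natCast] at hpreimage

lemma isClosedEmbedding_gridMap [Finite ι] (hm : m ≠ 0) (j : ι → Fin m) :
    Topology.IsClosedEmbedding (gridMap m j) := by
  have := Fintype.ofFinite ι
  exact (antilipschitzWith_inv_smul_add hm _).isClosedEmbedding
    ((uniformContinuous_const.add uniformContinuous_id).const_smul (m : ℝ)⁻¹)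

variable [Fintype ι]

lemma volume_preimage_gridMap_le (hm : m ≠ 0) (j : ι → Fin m) (s : Set (ι → ℝ)) :
    volume (gridMap m j ⁻¹' s) ≤ m ^ Fintype.card ι * volume s := by
  rw [← hausdorffMeasure_pi_real]
  exact hausdorffMeasure_preimage_inv_smul_add_le hm _ _ s

lemma euclideanHausdorff_preimage_gridMap_le (hm : m ≠ 0) (d : ℕ) (j : ι → Fin m)
    (s : Set (ι → ℝ)) :
    euclideanHausdorff ι d (gridMap m j ⁻¹' s) ≤ m ^ d * euclideanHausdorff ι d s := by
  simp only [euclideanHausdorff_apply]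
  exact hausdorffMeasure_preimage_inv_smul_add_le (E := EuclideanSpace ℝ ι) hm
    (WithLp.toLp 2 fun i => (j i : ℝ)) d (WithLp.ofLp ⁻¹' s)

variable [DecidableEq ι]

lemma sum_measure_unitCube_inter_preimage_gridMap_le {μ : Measure (ι → ℝ)} {c : ENNReal}
    (hm : m ≠ 0) (hμ : ∀ (j : ι → Fin m) s, μ (gridMap m j ⁻¹' s) ≤ c * μ s) {s : Set (ι → ℝ)}
    (hs : MeasurableSet s) :
    ∑ j, μ (unitCube ι ∩ gridMap m j ⁻¹' s) ≤ c * μ (unitCube ι ∩ s) := by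
  let cell (j : ι → Fin m) : Set (ι → ℝ) := gridMap m j '' unitCube ι ∩ s
  have hcell (j) : MeasurableSet (cell j) :=
    ((isClosedEmbedding_gridMap hm j).measurableEmbedding.measurableSet_image.2
      measurableSet_unitCube).inter hs
  have hdisj : Pairwise (Function.onFun Disjoint cell) := fun j j' hne =>
    disjoint_left.2 <| by
      rintro _ ⟨⟨x, hx, rfl⟩, _⟩ ⟨⟨y, hy, hxy⟩, _⟩
      exact hne (eq_of_gridMap_eq hm hx hy hxy.symm)
  calc ∑ j, μ (unitCube ι ∩ gridMap m j ⁻¹' s) ≤ ∑ j, c * μ (cell j) :=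
        Finset.sum_le_sum fun j _ => le_trans (measure_mono (t := gridMap m j ⁻¹' cell j)
          fun x ⟨hx, hxs⟩ => ⟨mem_image_of_mem _ hx, hxs⟩) (hμ j (cell j))
    _ = c * μ (⋃ j, cell j) := by
        rw [← Finset.mul_sum, measure_iUnion hdisj hcell, tsum_fintype]
    _ ≤ c * μ (unitCube ι ∩ s) := by
        gcongr
        exact iUnion_subset fun j => inter_subset_inter_left s
          (image_subset_iff.2 fun x hx => gridMap_mem_unitCube j hx)

lemma sum_torusMeasure_preimage_gridMap_le (hm : m ≠ 0) {s : Set (ι → ℝ)} (hs : MeasurableSet s) :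
    ∑ j, (torusMeasure ι).real (gridMap m j ⁻¹' s) ≤
      m ^ Fintype.card ι * (torusMeasure ι).real s := by
  have hrestrict {t : Set (ι → ℝ)} (ht : MeasurableSet t) :
      torusMeasure ι t = volume (unitCube ι ∩ t) := by
    rw [torusMeasure_eq_restrict, Measure.restrict_apply ht, inter_comm]
  have hsum := sum_measure_unitCube_inter_preimage_gridMap_le hm (volume_preimage_gridMap_le hm) hs
  simp only [← hrestrict hs, ← hrestrict ((continuous_gridMap _).measurable hs)] at hsum
  simp only [measureReal_def]
  rw [← ENNReal.toReal_sum fun _ _ => measure_ne_top _ _]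
  simpa using ENNReal.toReal_mono (ENNReal.mul_ne_top (by simp) (measure_ne_top _ _)) hsum

lemma card_le_two_mul_card_filter {α : Type*} [Fintype α] {a : α → ℝ} (ha : ∀ j, 0 ≤ a j) {θ : ℝ}
    (hθ : 0 < θ) (hsum : 2 * ∑ j, a j ≤ Fintype.card α * θ) :
    Fintype.card α ≤ 2 * #{j | a j ≤ θ} := by
  have hmarkov : #{j | ¬a j ≤ θ} * θ ≤ ∑ j, a j := by
    rw [← nsmul_eq_mul]
    exact (Finset.card_nsmul_le_sum _ _ _ fun j hj => (not_le.1 (Finset.mem_filter.1 hj).2).le)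
      |>.trans (Finset.sum_le_univ_sum_of_nonneg ha)
  have hcard : (2 * #{j | ¬a j ≤ θ} : ℝ) ≤ Fintype.card α :=
    le_of_mul_le_mul_right (by linarith) hθ
  have hsplit := Finset.card_filter_add_card_filter_not (s := Finset.univ) fun j => a j ≤ θ
  rw [Finset.card_univ] at hsplit
  norm_cast at hcard
  omega

/-- Most of the cells meet a small set `B` in a small proportion, and the nodal sets in these cells,
which are scaled by `1 / m`, add up. -/
lemma le_euclideanHausdorff_unitCube_inter_of_grid {k : ℕ} {s B : Set (Fin (k + 1) → ℝ)}
    (hm : m ≠ 0) (hs : MeasurableSet s) (hB : MeasurableSet B) {θ q : ℝ} (hθ : 0 < θ)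
    (hBθ : 2 * (torusMeasure _).real B ≤ θ)
    (hq : ∀ j : Fin (k + 1) → Fin m, (torusMeasure _).real (gridMap m j ⁻¹' B) ≤ θ →
      ENNReal.ofReal q ≤ euclideanHausdorff _ k (unitCube _ ∩ gridMap m j ⁻¹' s)) :
    ENNReal.ofReal (q / 2 * m) ≤ euclideanHausdorff _ k (unitCube _ ∩ s) := by
  let good : Finset (Fin (k + 1) → Fin m) := {j | (torusMeasure _).real (gridMap m j ⁻¹' B) ≤ θ}
  have hgood : (m : ENNReal) ^ (k + 1) ≤ 2 * good.card := by
    have hcount := card_le_two_mul_card_filter (α := Fin (k + 1) → Fin m)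
      (fun j => measureReal_nonneg) hθ <| calc
        2 * ∑ j, (torusMeasure _).real (gridMap m j ⁻¹' B) ≤
            2 * (m ^ (k + 1) * (torusMeasure _).real B) := by
          gcongr
          simpa using sum_torusMeasure_preimage_gridMap_le hm hB
        _ ≤ Fintype.card (Fin (k + 1) → Fin m) * θ := by
          rw [mul_left_comm]
          simp only [Fintype.card_pi_const, Fintype.card_fin, Nat.cast_pow]
          gcongr
    simp only [Fintype.card_pi_const, Fintype.card_fin] at hcount
    exact_mod_cast hcount
  have hsum := calc good.card * ENNReal.ofReal q
      = ∑ _ ∈ good, ENNReal.ofReal q := by rw [Finset.sum_const, nsmul_eq_mul]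
    _ ≤ ∑ j ∈ good, euclideanHausdorff _ k (unitCube _ ∩ gridMap m j ⁻¹' s) :=
        Finset.sum_le_sum fun j hj => hq j (Finset.mem_filter.1 hj).2
    _ ≤ ∑ j, euclideanHausdorff _ k (unitCube _ ∩ gridMap m j ⁻¹' s) :=
        Finset.sum_le_univ_sum_of_nonneg fun _ => zero_le
    _ ≤ m ^ k * euclideanHausdorff _ k (unitCube _ ∩ s) :=
        sum_measure_unitCube_inter_preimage_gridMap_le hm
          (euclideanHausdorff_preimage_gridMap_le hm k) hs
  have hm' : (m : ENNReal) ^ k ≠ 0 := pow_ne_zero _ (Nat.cast_ne_zero.2 hm)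
  refine (ENNReal.mul_le_mul_iff_right hm' (by finiteness)).1 (le_trans ?_ hsum)
  calc (m : ENNReal) ^ k * ENNReal.ofReal (q / 2 * m) = m ^ (k + 1) * ENNReal.ofReal (q / 2) := by
        rw [ENNReal.ofReal_mul' m.cast_nonneg, ENNReal.ofReal_natCast]; ring
    _ ≤ 2 * good.card * ENNReal.ofReal (q / 2) := by gcongr
    _ = good.card * ENNReal.ofReal (2 * (q / 2)) := by
        rw [ENNReal.ofReal_mul zero_le_two, ENNReal.ofReal_ofNat]; ring
    _ = good.card * ENNReal.ofReal q := by rw [mul_div_cancel₀ q two_ne_zero]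

end Grid

/-! ### The nodal set in one cell -/

section Rescaling

variable {ι : Type*} [Fintype ι]

lemma coordLaplacian_comp_smul_add [DecidableEq ι] (u : (ι → ℝ) → ℝ) (r : ℝ) (v x : ι → ℝ) :
    coordLaplacian (fun y => u (r • (v + y))) x = r ^ 2 * coordLaplacian u (r • (v + x)) := by
  have hiter (i : ι) : partialDeriv i (partialDeriv i fun y => u (r • (v + y))) x =
      r ^ 2 * partialDeriv i (partialDeriv i u) (r • (v + x)) := by
    have hpartial : partialDeriv i (fun y => u (r • (v + y))) =
        r • fun y => partialDeriv i u (r • (v + y)) :=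
      funext (partialDeriv_comp_smul_add i u r v)
    rw [hpartial, partialDeriv, fderiv_const_smul_field, sq, mul_assoc,
      ← smul_eq_mul r (partialDeriv _ _ _), ← partialDeriv_comp_smul_add]
    rfl
  simp only [coordLaplacian, hiter, Finset.mul_sum]

lemma isOpen_boxGrowthSet {g : (ι → ℝ) → ℝ} (hg : Continuous g) (A s : ℝ) :
    IsOpen (boxGrowthSet A s g) := by
  have hcompact : IsCompact (univ.pi fun _ : ι => Icc (-s) s) :=
    isCompact_univ_pi fun _ => isCompact_Icc
  exact isOpen_lt (by fun_prop)
    (continuous_parametric_integral_of_continuous (by fun_prop) hcompact)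

open scoped Pointwise in
lemma pow_mul_integral_comp_smul_add_le {g : (ι → ℝ) → ℝ} (hg : Continuous g)
    (hg0 : ∀ x, 0 ≤ g x) {s : ℝ} (hs : 0 < s) (v : ι → ℝ) {x : ι → ℝ} (hx : x ∈ unitCube ι) :
    s ^ Fintype.card ι * ∫ y, g (s • (v + y)) ∂torusMeasure ι ≤
      ∫ h in univ.pi fun _ => Icc (-s) s, g (s • (v + x) + h) := by
  have hbox : s • (univ.pi fun _ : ι => Icc (-1 : ℝ) 1) = univ.pi fun _ => Icc (-s) s := by
    rw [smul_univ_pi]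
    refine congrArg _ (funext fun i => ?_)
    rw [Pi.smul_apply, LinearOrderedField.smul_Icc hs, mul_neg, mul_one]
  have hscale := Measure.setIntegral_comp_smul_of_pos volume
    (fun h => g (s • (v + x) + h)) (univ.pi fun _ : ι => Icc (-1 : ℝ) 1) hs
  rw [hbox, Module.finrank_pi, smul_eq_mul, eq_inv_mul_iff_mul_eq₀ (by positivity)] at hscale
  have hsub : (x + ·) ⁻¹' unitCube ι ⊆ univ.pi fun _ => Icc (-1 : ℝ) 1 := by
    intro w hw i _
    have hxi : x i ∈ Ico 0 1 := hx i trivial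
    have hxwi : x i + w i ∈ Ico 0 1 := hw i trivial
    exact ⟨by linarith [hxi.2, hxwi.1], by linarith [hxi.1, hxwi.2]⟩
  rw [← hscale]
  gcongr
  calc ∫ y, g (s • (v + y)) ∂torusMeasure ι
      = ∫ w in (x + ·) ⁻¹' unitCube ι, g (s • (v + x) + s • w) := by
        rw [torusMeasure_eq_restrict,
          ← (measurePreserving_add_left volume x).setIntegral_preimage_emb
            (measurableEmbedding_addLeft x)]
        simp only [smul_add, add_assoc]
    _ ≤ ∫ w in univ.pi fun _ => Icc (-1) 1, g (s • (v + x) + s • w) := by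
        refine setIntegral_mono_set ?_ (Filter.Eventually.of_forall fun w => hg0 _)
          hsub.eventuallyLE
        exact (by fun_prop : Continuous fun w => g (s • (v + x) + s • w)).continuousOn
          |>.integrableOn_compact (isCompact_univ_pi fun _ => isCompact_Icc)

lemma integral_comp_gridMap_le {m : ℕ} (hm : m ≠ 0) {g : (ι → ℝ) → ℝ} (hg : Continuous g)
    (hg0 : ∀ x, 0 ≤ g x) {A : ℝ} (j : ι → Fin m) {x : ι → ℝ} (hx : x ∈ unitCube ι)
    (hxg : gridMap m j x ∉ boxGrowthSet A (m : ℝ)⁻¹ g) :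
    ∫ y, g (gridMap m j y) ∂torusMeasure ι ≤ (2 * A) ^ Fintype.card ι * g (gridMap m j x) := by
  have hs : 0 < (m : ℝ)⁻¹ := by positivity
  have hle := (pow_mul_integral_comp_smul_add_le hg hg0 hs _ hx).trans (not_lt.1 hxg)
  refine le_of_mul_le_mul_left (hle.trans_eq ?_) (pow_pos hs (Fintype.card ι))
  simp only [gridMap, mul_pow]
  ring

end Rescaling

lemma measureReal_halfCube {ι : Type*} [Fintype ι] :
    (torusMeasure ι).real (halfCube ι) = (1 / 2) ^ Fintype.card ι := by
  have hIcc : circleMeasure.real (Icc (1 / 4) (3 / 4)) = 1 / 2 := by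
    rw [circleMeasure, measureReal_restrict_apply measurableSet_Icc,
      inter_eq_left.2 (Icc_subset_Ico_iff (by norm_num) |>.2 (by norm_num)), volume_real_Icc]
    norm_num
  rw [measureReal_def, torusMeasure, halfCube, Measure.pi_pi, ENNReal.toReal_prod]
  simp only [← measureReal_def, hIcc, Finset.prod_const, Finset.card_univ]

lemma IsOrthogonalWeight.le_euclideanHausdorff_zeroSet {k : ℕ} {u W : (Fin (k + 1) → ℝ) → ℝ}
    {H B : Set (Fin (k + 1) → ℝ)} {ρ θ c : ℝ}
    (hW : IsOrthogonalWeight (torusMeasure _) H ρ u W) (hu : Continuous u) (hρ : 0 ≤ ρ)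
    (hH : MeasurableSet H) (hB : MeasurableSet B) (hHθ : 2 * θ ≤ (torusMeasure _).real H)
    (hBθ : (torusMeasure _).real B ≤ θ) (hc : 1 ≤ c)
    (huc : ∀ x ∈ H \ B, ∫ y, u y ^ 2 ∂torusMeasure _ ≤ c * u x ^ 2) :
    ENNReal.ofReal (((ρ * θ) ^ 2 / (4 * c)) ^ 2 / (k + 1)) ≤
      euclideanHausdorff (Fin (k + 1)) k {z ∈ unitCube _ | u z = 0} := by
  have hdiff : θ ≤ (torusMeasure _).real (H \ B) := by
    linarith [le_measureReal_sdiff (μ := torusMeasure (Fin (k + 1))) (s₁ := H) (s₂ := B)]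
  have hsign {w : (Fin (k + 1) → ℝ) → ℝ} (hw : Continuous w)
      (hWw : IsOrthogonalWeight (torusMeasure _) H ρ w W) (hwu : ∀ x, w x ^ 2 = u x ^ 2) :
      (ρ * θ) ^ 2 / (4 * c) ≤ (torusMeasure _).real {x | 0 ≤ w x} := by
    have hmem : MemLp w 2 (torusMeasure _) := by
      rw [memLp_two_iff_integrable_sq hw.aestronglyMeasurable, torusMeasure_eq_restrict_Icc]
      exact (hw.pow 2).continuousOn.integrableOn_compact isCompact_Icc
    have hθ : 0 ≤ θ := measureReal_nonneg.trans hBθ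
    rw [div_le_iff₀' (by linarith)]
    refine le_trans (by gcongr) <| (hWw.mono sdiff_subset).sq_mul_measureReal_le hρ (hH.diff hB)
      hmem (measurableSet_le measurable_const hw.measurable) hc ?_
    simpa only [hwu] using huc
  refine euclideanHausdorff_zeroSet_unitCube_ge hu (by positivity) (hsign hu hW fun _ => rfl) ?_
  simpa using hsign hu.neg hW.neg fun x => neg_sq (u x)

lemma measurableSet_halfCube {ι : Type*} [Countable ι] : MeasurableSet (halfCube ι) :=
  MeasurableSet.univ_pi fun _ => measurableSet_Icc

lemma halfCube_subset_unitCube {ι : Type*} : halfCube ι ⊆ unitCube ι :=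
  pi_mono fun _ _ => (Icc_subset_Ico_iff (by norm_num)).2 (by norm_num)

lemma IsOrthogonalWeight.le_euclideanHausdorff_preimage_gridMap {k m : ℕ}
    {ψ W : (Fin (k + 1) → ℝ) → ℝ} {ρ A : ℝ} {j : Fin (k + 1) → Fin m}
    (hW : IsOrthogonalWeight (torusMeasure _) (halfCube _) ρ (fun y => ψ (gridMap m j y)) W)
    (hψ : Continuous ψ) (hρ : 0 ≤ ρ) (hm : m ≠ 0)
    (hgrowth : (torusMeasure _).real
      (gridMap m j ⁻¹' boxGrowthSet A (m : ℝ)⁻¹ fun x => ψ x ^ 2) ≤ (1 / 2) ^ (k + 2)) :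
    ENNReal.ofReal
        (((ρ * (1 / 2) ^ (k + 2)) ^ 2 / (4 * max 1 ((2 * A) ^ (k + 1)))) ^ 2 / (k + 1)) ≤
      euclideanHausdorff _ k (unitCube _ ∩ gridMap m j ⁻¹' {x | ψ x = 0}) := by
  have hgrid := continuous_gridMap j
  have hsq : Continuous fun x => ψ x ^ 2 := hψ.pow 2
  have hopen := (isOpen_boxGrowthSet hsq A (m : ℝ)⁻¹).preimage hgrid
  refine hW.le_euclideanHausdorff_zeroSet (hψ.comp hgrid) hρ measurableSet_halfCube
    hopen.measurableSet (by simp [measureReal_halfCube, pow_succ']) hgrowth (le_max_left _ _)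
    fun x ⟨hx, hxB⟩ => ?_
  refine (integral_comp_gridMap_le hm hsq (fun _ => sq_nonneg _) j
    (halfCube_subset_unitCube hx) hxB).trans ?_
  rw [Fintype.card_fin]
  exact mul_le_mul_of_nonneg_right (le_max_right _ _) (sq_nonneg _)

/-! ### The linear lower bound -/

lemma exists_nat_div_mem_Icc {r x : ℝ} (hr : 0 < r) (hx : r ≤ x) :
    ∃ m : ℕ, m ≠ 0 ∧ x / m ∈ Icc r (2 * r) := by
  have hone : 1 ≤ x / r := (one_le_div hr).2 hx
  have hm : 1 ≤ ⌊x / r⌋₊ := Nat.le_floor (by exact_mod_cast hone)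
  have hm1 : (1 : ℝ) ≤ ⌊x / r⌋₊ := by exact_mod_cast hm
  have hfloor : ⌊x / r⌋₊ ≤ x / r := Nat.floor_le (by linarith)
  have hlt : x / r < ⌊x / r⌋₊ + 1 := Nat.lt_floor_add_one _
  rw [le_div_iff₀ hr] at hfloor
  rw [div_lt_iff₀ hr] at hlt
  exact ⟨_, (Nat.lt_of_succ_le hm).ne', (le_div_iff₀ (by linarith)).2 (by linarith),
    (div_le_iff₀ (by linarith)).2 (by nlinarith)⟩

namespace IsTorusEigenfunction

variable {k : ℕ} {lam : ℝ} {ψ : (Fin (k + 1) → ℝ) → ℝ}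

lemma isOrthogonalWeight_one (hψ : IsTorusEigenfunction lam ψ) (hlam : lam ≠ 0)
    (H : Set (Fin (k + 1) → ℝ)) {ρ : ℝ} (hρ : ρ ≤ 1) :
    IsOrthogonalWeight (torusMeasure _) H ρ ψ 1 where
  aestronglyMeasurable := aestronglyMeasurable_const
  mem_Icc _ := by simp
  le_of_mem _ _ := hρ
  integral_mul_eq_zero := by
    have hmean := hψ.integral_smul_torusChar_eq_zero (K := 0)
      (by simpa using (pow_ne_zero 2 hlam).symm)
    simp only [torusChar, Pi.zero_apply, Int.cast_zero, zero_mul, Finset.sum_const_zero,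
      AddChar.map_zero_eq_one, Circle.coe_one, Complex.real_smul, mul_one,
      integral_complex_ofReal, Complex.ofReal_eq_zero] at hmean
    simpa only [torusMeasure_eq_restrict_Icc, Pi.one_apply, one_mul] using hmean

lemma isOrthogonalWeight_comp_gridMap (hψ : IsTorusEigenfunction lam ψ) {m : ℕ}
    (hm : lam / m ∈ Icc (2 * π * √(k + 1)) (2 * (2 * π * √(k + 1)))) (j : Fin (k + 1) → Fin m) :
    IsOrthogonalWeight (torusMeasure _) (halfCube _) ((1 / 2) ^ (k + 1) / 7)
      (fun y => ψ (gridMap m j y)) (bumpWeight (lam / m)) := by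
  have hroot : √(k + 1 : ℝ) ^ 2 = k + 1 := sq_sqrt (by positivity)
  have hsq_le := pow_le_pow_left₀ (by positivity) hm.1 2
  have hle_sq := pow_le_pow_left₀ ((by positivity : 0 ≤ 2 * π * √(k + 1)).trans hm.1) hm.2 2
  refine isOrthogonalWeight_bumpWeight (hψ.contDiff.comp ?_) (fun x => ?_) ⟨?_, ?_⟩
  · unfold gridMap
    fun_prop
  · simp only [gridMap]
    rw [coordLaplacian_comp_smul_add, hψ.coordLaplacian_eq]
    ring
  · linear_combination hsq_le - 4 * π ^ 2 * hroot
  · linear_combination hle_sq + 16 * π ^ 2 * hroot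

lemma exists_grid_isOrthogonalWeight (hψ : IsTorusEigenfunction lam ψ) (hlam : 0 < lam) :
    ∃ m : ℕ, m ≠ 0 ∧ lam ≤ 4 * π * √(k + 1) * m ∧ ∀ j, ∃ W,
      IsOrthogonalWeight (torusMeasure _) (halfCube _) ((1 / 2) ^ (k + 1) / 7)
        (fun y => ψ (gridMap m j y)) W := by
  rcases le_total (2 * π * √(k + 1)) lam with hlarge | hsmall
  · obtain ⟨m, hm, hlamm⟩ := exists_nat_div_mem_Icc (by positivity) hlarge
    have hle := hlamm.2
    rw [div_le_iff₀ (by positivity)] at hle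
    exact ⟨m, hm, by linarith, fun j => ⟨_, hψ.isOrthogonalWeight_comp_gridMap hlamm j⟩⟩
  · have hroot : 0 ≤ π * √(k + 1) := by positivity
    refine ⟨1, one_ne_zero, by push_cast; linarith, fun j => ⟨1, ?_⟩⟩
    have hgrid (y) : gridMap 1 j y = y := by
      ext i
      simp [gridMap]
    simp only [hgrid]
    refine hψ.isOrthogonalWeight_one hlam.ne' _ (div_le_one_of_le₀ ?_ (by norm_num))
    exact (pow_le_one₀ (by norm_num) (by norm_num)).trans (by norm_num)

lemma measureReal_boxGrowthSet_sq_le (hψ : IsTorusEigenfunction lam ψ) (hlam : 0 ≤ lam)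
    {A s ε : ℝ} (hA : 0 ≤ A) (hs : 0 ≤ s)
    (hgrowth : ∀ p : Polynomial ℂ, p.natDegree ≤ 4 * lam →
      circleMeasure.real (growthSet A s p) ≤ ε) :
    (torusMeasure _).real (boxGrowthSet A s fun x => ψ x ^ 2) ≤ (k + 1) * ε := by
  obtain ⟨S, c, hS, hsum⟩ := hψ.exists_eq_trigSum hlam
  have hfreq (p : S × S) (i) : |(p.1 + p.2 : Fin (k + 1) → ℤ) i| ≤ (2 * ⌊lam⌋₊ : ℕ) := by
    have h₁ := abs_le_floor_of_sum_sq_eq hlam (hS _ p.1.2) i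
    have h₂ := abs_le_floor_of_sum_sq_eq hlam (hS _ p.2.2) i
    push_cast
    exact (abs_add_le _ _).trans (by linarith)
  have hdegree (p : Polynomial ℂ) (hp : p.natDegree ≤ 2 * (2 * ⌊lam⌋₊)) :
      (p.natDegree : ℝ) ≤ 4 * lam := by
    have hfloor : (⌊lam⌋₊ : ℝ) ≤ lam := Nat.floor_le hlam
    have hcast : (p.natDegree : ℝ) ≤ 2 * (2 * ⌊lam⌋₊) := by exact_mod_cast hp
    linarith
  have hbox := measureReal_boxGrowthSet_le hs hA (fun p hp => hgrowth p (hdegree p hp)) hfreq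
    (g := fun x => ψ x ^ 2) (fun x => by rw [Complex.ofReal_pow, hsum, trigSum_sq])
    fun _ => sq_nonneg _
  simpa using hbox

end IsTorusEigenfunction

theorem exists_measureReal_boxGrowthSet_sq_le (k : ℕ) {ε : ℝ} (hε : 0 < ε) (hε1 : ε ≤ 1) (r : ℝ) :
    ∃ A > 0, ∀ lam > 0, ∀ ψ : (Fin (k + 1) → ℝ) → ℝ, IsTorusEigenfunction lam ψ →
      (∃ x, ψ x ≠ 0) → ∀ s ≥ 0, s * lam ≤ r →
        (torusMeasure _).real (boxGrowthSet A s fun x => ψ x ^ 2) ≤ ε := by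
  obtain ⟨A, hA, hgrowth⟩ := exists_measureReal_growthSet_le (ε := ε / (k + 1)) (by positivity)
    (div_le_one_of_le₀ (hε1.trans (by simp)) (by positivity)) (4 * r)
  refine ⟨A, hA, fun lam hlam ψ hψ hne s hs hsr => ?_⟩
  have hM : 1 ≤ 4 * lam := by linarith [hψ.two_pi_le hlam hne, two_le_pi]
  have hsM : s * (4 * lam) ≤ 4 * r := by linarith
  refine (hψ.measureReal_boxGrowthSet_sq_le hlam.le hA.le hs (hgrowth _ hM _ hsM)).trans_eq ?_
  field_simp

theorem exists_mul_le_euclideanHausdorff_zeroSet (k : ℕ) :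
    ∃ C > 0, ∀ lam > 0, ∀ ψ : (Fin (k + 1) → ℝ) → ℝ, IsTorusEigenfunction lam ψ →
      (∃ x, ψ x ≠ 0) → ENNReal.ofReal (C * lam) ≤
        euclideanHausdorff (Fin (k + 1)) k (unitCube _ ∩ {x | ψ x = 0}) := by
  set r := 4 * π * √(k + 1)
  have hr : 0 < r := by positivity
  obtain ⟨A, hA, hgrowth⟩ := exists_measureReal_boxGrowthSet_sq_le k (ε := (1 / 2) ^ (k + 3))
    (by positivity) (pow_le_one₀ (by norm_num) (by norm_num)) r
  set q := (((1 / 2) ^ (k + 1) / 7 * (1 / 2) ^ (k + 2)) ^ 2 /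
    (4 * max 1 ((2 * A) ^ (k + 1)))) ^ 2 / (k + 1 : ℝ)
  have hq : 0 < q := by positivity
  refine ⟨q / 2 / r, by positivity, fun lam hlam ψ hψ hne => ?_⟩
  obtain ⟨m, hm, hlamm, hweight⟩ := hψ.exists_grid_isOrthogonalWeight hlam
  have hcont := hψ.contDiff.continuous
  have hzero : MeasurableSet {x | ψ x = 0} := (isClosed_eq hcont continuous_const).measurableSet
  set B := boxGrowthSet A (m : ℝ)⁻¹ fun x => ψ x ^ 2
  have hB : MeasurableSet B := (isOpen_boxGrowthSet (hcont.pow 2) A _).measurableSet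
  have hsmall : (torusMeasure _).real B ≤ _ := hgrowth lam hlam ψ hψ hne (m : ℝ)⁻¹ (by positivity)
    ((inv_mul_le_iff₀ (by positivity)).2 (by linarith))
  have hcell (j) (hj : (torusMeasure _).real (gridMap m j ⁻¹' B) ≤ (1 / 2) ^ (k + 2)) :
      ENNReal.ofReal q ≤ euclideanHausdorff _ k (unitCube _ ∩ gridMap m j ⁻¹' {x | ψ x = 0}) := by
    obtain ⟨W, hW⟩ := hweight j
    exact hW.le_euclideanHausdorff_preimage_gridMap hcont (by positivity) hm hj
  calc ENNReal.ofReal (q / 2 / r * lam) ≤ ENNReal.ofReal (q / 2 * m) := by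
        rw [div_mul_eq_mul_div, mul_div_assoc]
        gcongr
        rwa [div_le_iff₀' hr]
    _ ≤ _ := le_euclideanHausdorff_unitCube_inter_of_grid hm hzero hB (by positivity)
        ((mul_le_mul_of_nonneg_left hsmall zero_le_two).trans_eq (by ring)) hcell

/-! ### Passage to Euclidean space -/

section EuclideanSpace

variable {n : ℕ} {φ : EuclideanSpace ℝ (Fin n) → ℝ}

lemma contDiff_comp_toLp {m : WithTop ℕ∞} (hφ : ContDiff ℝ m φ) :
    ContDiff ℝ m fun x => φ (WithLp.toLp 2 x) :=
  hφ.comp (PiLp.continuousLinearEquiv 2 ℝ fun _ : Fin n => ℝ).symm.contDiff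

lemma partialDeriv_comp_toLp (i : Fin n) (hφ : Differentiable ℝ φ) :
    partialDeriv i (fun y => φ (WithLp.toLp 2 y)) =
      fun x => fderiv ℝ φ (WithLp.toLp 2 x) (EuclideanSpace.single i 1) := by
  ext x
  have hcomp : HasFDerivAt (fun y => φ (WithLp.toLp 2 y)) _ x := (hφ _).hasFDerivAt.comp x
    (PiLp.continuousLinearEquiv 2 ℝ fun _ : Fin n => ℝ).symm.hasFDerivAt
  rw [partialDeriv, hcomp.fderiv]
  rfl

lemma coordLaplacian_comp_toLp (hφ : ContDiff ℝ 2 φ) (x : Fin n → ℝ) :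
    coordLaplacian (fun y => φ (WithLp.toLp 2 y)) x = lap φ (WithLp.toLp 2 x) := by
  refine Finset.sum_congr rfl fun i _ => ?_
  have hderiv : ContDiff ℝ 1 fun y => fderiv ℝ φ y (EuclideanSpace.single i 1) :=
    (hφ.fderiv_right (by norm_num)).clm_apply contDiff_const
  rw [partialDeriv_comp_toLp i (hφ.differentiable two_ne_zero),
    partialDeriv_comp_toLp i (hderiv.differentiable one_ne_zero)]

lemma isTorusEigenfunction_comp_toLp {lam : ℝ} (hφ : ContDiff ℝ 2 φ) (hper : ZPeriodic φ)
    (hlap : ∀ x, lap φ x = -lam ^ 2 * φ x) :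
    IsTorusEigenfunction lam fun x => φ (WithLp.toLp 2 x) where
  contDiff := contDiff_comp_toLp hφ
  periodic x := hper (WithLp.toLp 2 x)
  coordLaplacian_eq x := by rw [coordLaplacian_comp_toLp hφ, hlap]

lemma hausdorffMeasure_Qcube_sep (d : ℝ) (p : EuclideanSpace ℝ (Fin n) → Prop) :
    μH[d] {x ∈ Qcube n | p x} =
      euclideanHausdorff _ d (unitCube _ ∩ {x | p (WithLp.toLp 2 x)}) := by
  rw [euclideanHausdorff_apply]
  congr 1
  ext x
  simp [Qcube, unitCube]

end EuclideanSpace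

theorem nodal_set_lower_bound_general (n : ℕ) :
    ∃ C : ℝ, 0 < C ∧
      ∀ (lam : ℝ), 0 < lam →
        ∀ (φ : EuclideanSpace ℝ (Fin n) → ℝ), ContDiff ℝ 2 φ → ZPeriodic φ →
          (∀ x, lap φ x = -lam ^ 2 * φ x) → (∃ x, φ x ≠ 0) → ∀ a : ℝ, a ≤ 1 →
            ENNReal.ofReal (C * lam ^ a) ≤ μH[(n : ℝ) - 1] {x ∈ Qcube n | φ x = 0} := by
  rcases n with _ | k
  · refine ⟨1, one_pos, fun lam hlam φ _ _ hlap ⟨x, hx⟩ => absurd (hlap x) ?_⟩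
    simp [lap, hlam.ne', hx]
  obtain ⟨C, hC, hbound⟩ := exists_mul_le_euclideanHausdorff_zeroSet k
  refine ⟨C, hC, fun lam hlam φ hφ hper hlap ⟨x, hx⟩ a ha => ?_⟩
  have hψ := isTorusEigenfunction_comp_toLp hφ hper hlap
  have hne : ∃ y, φ (WithLp.toLp 2 y) ≠ 0 := ⟨WithLp.ofLp x, hx⟩
  have hlam1 : 1 ≤ lam := by linarith [hψ.two_pi_le hlam hne, two_le_pi]
  rw [hausdorffMeasure_Qcube_sep, Nat.cast_succ, add_sub_cancel_right]
  refine le_trans (ENNReal.ofReal_le_ofReal ?_) (hbound lam hlam _ hψ hne)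
  gcongr
  simpa using rpow_le_rpow_of_exponent_le hlam1 ha

theorem nodal_set_lower_bound (n : ℕ) (hn : 2 ≤ n) :
    ∃ C : ℝ, 0 < C ∧
      ∀ (lam : ℝ), 0 < lam →
        ∀ (φ : EuclideanSpace ℝ (Fin n) → ℝ), ContDiff ℝ (⊤ : ℕ∞) φ → ZPeriodic φ →
          (∀ x, lap φ x = -lam ^ 2 * φ x) → (∫ x in Qcube n, (φ x) ^ 2) = 1 →
          μH[(n : ℝ) - 1] {x ∈ Qcube n | φ x = 0} ≥
            ENNReal.ofReal (C * lam ^ ((7 : ℝ) / 4 - 3 * (n : ℝ) / 4)) := by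
  obtain ⟨C, hC, hbound⟩ := nodal_set_lower_bound_general n
  refine ⟨C, hC, fun lam hlam φ hφ hper hlap hnorm =>
    hbound lam hlam φ (contDiff_infty.1 hφ 2) hper hlap ?_ _ ?_⟩
  · by_contra! hzero
    simp [hzero] at hnorm
  · have hn' : (2 : ℝ) ≤ n := by exact_mod_cast hn
    linarith
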